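/- arXiv:2111.03723 — 4 statements merged into one kernel-verified Lean document; each statement's English description precedes it below -/
import Mathlib

section
/- For every fixed odd integer n, there are infinitely many integers m such that 4m³ − 27n² is squarefree; that is, the set {m ∈ ℤ : 4m³ − 27n² is squarefree} is infinite. -/
/-!
The values `F n t = 4 (1 + 6n²t)³ - 27 n²` are coprime to `6n`, and for every large `N` at least one
of them with `t ∈ [N, 2N)` is squarefree. To see this, the `t` for which `p² ∣ F n t` for some prime
`p` are counted separately for `p ≤ A N` and for `p > A N`, with a constant `A` depending on `n`.

Primes up to `A N` (`card_small_le`). Such a `p` is at least `5`, and `p² ∣ F n t` holds for at most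
three residues of `t` modulo `p²`. The count is therefore at most
`∑ 3 (N / p² + 1) ≤ 3N/4 + 3 π(A N)`, and `π(A N) = o(N)`.

Primes beyond `A N` (`exists_card_large_le`). Here `F n t = q p²`, where `q` is at most a small
fraction of `N`, because `F n t = O(N³)`. Let `a = t mod q`, so that `q ∣ F n a`.

* The number of pairs `(q, a)` with `a < q ≤ Q` and `q ∣ F n a` is `O(Q)` (`exists_card_pairs_le`).
  Indeed, `2 F n a = b³ - 54 n²` with `b = 2 (1 + 6n²a)`, so that with `θ³ = 54 n²` the pair gives
  the ideal `(q, θ - b)` of norm at most `q` in the ring of integers of `ℚ(θ)`. This assignment is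
  injective, and the number of ideals of norm at most `Q` in a number field is `O(Q)`.
* For a given pair, let `2 ^ j ≤ N / q < 2 ^ (j + 1)`. The number of `t ≡ a (mod q)` in `[N, 2N)`
  for which `F n t / q` is a square is at most `6 · 2 ^ j · (3/4) ^ k` (`card_fiber_le`), where `k`
  is the number of primes `200 ≤ l ≤ j / 2` not dividing `n`. Modulo each of these primes at most
  three quarters of the residues are possible, by a bound for the character sums of
  `4 m³ - c` (`cubic_sum_sq_le`), and the product of these primes is at most `2 ^ j`.

Level `j` thus contributes `O(N (3/4) ^ k)`. By Chebyshev's bound the sum of `(3/4) ^ k` over `j`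
converges (`summable_sievePrimes`). A large `A` leaves only the levels `j ≥ j₀`, which together
contribute at most `N / 16`.
-/

/-! ### Square values of cubics over finite fields -/

theorem card_pow_eq_le {F : Type*} [Field F] [Fintype F] [DecidableEq F] (k : ℕ) (hk : 0 < k)
    (a : F) : (Finset.univ.filter fun x : F => x ^ k = a).card ≤ k := by
  calc (Finset.univ.filter fun x : F => x ^ k = a).card
      ≤ (Polynomial.nthRoots k a).toFinset.card := by
        apply Finset.card_le_card
        intro x hx
        rw [Multiset.mem_toFinset, Polynomial.mem_nthRoots hk]
        simpa using hx
    _ ≤ k := (Multiset.toFinset_card_le _).trans (Polynomial.card_nthRoots k a)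

/-- For `a ≠ b` the substitution `x = b - c`, followed by `y = 1 + (a - b) / x`, bounds the sum by a
sum of the character over the whole field, which vanishes. -/
theorem sum_quadraticChar_mul {F : Type*} [Field F] [Fintype F] [DecidableEq F]
    (hF : ringChar F ≠ 2) (a b : F) :
    ∑ c : F, quadraticChar F ((a - c) * (b - c)) ≤ if a = b then (Fintype.card F : ℤ) else 0 := by
  split_ifs with h
  · calc ∑ c : F, quadraticChar F ((a - c) * (b - c)) ≤ ∑ c : F, (1 : ℤ) := by
          apply Finset.sum_le_sum
          intro c _
          by_cases h0 : (a - c) * (b - c) = 0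
          · rw [h0, quadraticChar_zero]; norm_num
          · rcases quadraticChar_dichotomy h0 with h | h <;> rw [h]
            norm_num
      _ = _ := by simp
  · have hd : a - b ≠ 0 := sub_ne_zero.mpr h
    have h1 : ∑ c : F, quadraticChar F ((a - c) * (b - c))
        = ∑ x : F, quadraticChar F ((a - b + x) * x) := by
      refine Fintype.sum_equiv (Equiv.subLeft b) _ _ fun c => ?_
      simp
    have h2 : ∀ x : F, quadraticChar F ((a - b + x) * x) ≤ quadraticChar F (1 + (a - b) * x⁻¹) := by
      intro x
      by_cases hx : x = 0
      · simp [hx]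
      · have : (a - b + x) * x = (1 + (a - b) * x⁻¹) * x ^ 2 := by field_simp; ring
        rw [this, map_mul, quadraticChar_sq_one' hx, mul_one]
    have h3 : ∑ x : F, quadraticChar F (1 + (a - b) * x⁻¹) = ∑ y : F, quadraticChar F y := by
      refine Fintype.sum_bijective (fun x : F => 1 + (a - b) * x⁻¹) ?_ _ _ fun x => rfl
      apply Function.Injective.bijective_of_finite
      intro x y hxy
      simpa [hd] using hxy
    rw [h1]
    exact (Finset.sum_le_sum fun x _ => h2 x).trans (by rw [h3, quadraticChar_sum_zero hF])

/-- An elementary substitute for the Hasse bound for the curves `y² = 4m³ - c`. The second moment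
of the character sum over all `c` is at most `3 l²`, where `l` is the number of elements of the
field, and the sum takes the same value at all `c e⁶`, which cover at least `(l - 1) / 6`
values of `c`. -/
theorem cubic_sum_sq_le {F : Type*} [Field F] [Fintype F] [DecidableEq F]
    (hF : ringChar F ≠ 2) (c : F) (hc : c ≠ 0) :
    (∑ m : F, quadraticChar F (4 * m ^ 3 - c)) ^ 2 ≤ 36 * (Fintype.card F : ℤ) := by
  set S : F → ℤ := fun c => ∑ m : F, quadraticChar F (4 * m ^ 3 - c) with hS
  set l : ℤ := (Fintype.card F : ℤ) with hl
  have h4 : (4 : F) ≠ 0 := by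
    have : (2 : F) ≠ 0 := Ring.two_ne_zero hF
    have h : (4 : F) = 2 * 2 := by norm_num
    rw [h]; exact mul_ne_zero this this
  have hl2 : 2 ≤ l := by
    have := Fintype.one_lt_card (α := F)
    omega
  -- Summing over `d` first leaves only the diagonal `m ^ 3 = m' ^ 3`.
  have htot : ∑ d : F, S d ^ 2 ≤ 3 * l ^ 2 := by
    calc ∑ d : F, S d ^ 2
        = ∑ d : F, ∑ m : F, ∑ m' : F, quadraticChar F ((4 * m ^ 3 - d) * (4 * m' ^ 3 - d)) := by
          refine Finset.sum_congr rfl fun d _ => ?_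
          simp only [hS, sq, Finset.sum_mul_sum, map_mul]
      _ = ∑ m : F, ∑ m' : F, ∑ d : F, quadraticChar F ((4 * m ^ 3 - d) * (4 * m' ^ 3 - d)) := by
          rw [Finset.sum_comm]
          refine Finset.sum_congr rfl fun d _ => ?_
          rw [Finset.sum_comm]
      _ ≤ ∑ m : F, ∑ m' : F, if 4 * m ^ 3 = 4 * m' ^ 3 then l else 0 :=
          Finset.sum_le_sum fun m _ => Finset.sum_le_sum fun m' _ =>
            sum_quadraticChar_mul hF _ _
      _ ≤ ∑ m : F, 3 * l := by
          refine Finset.sum_le_sum fun m _ => ?_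
          rw [← Finset.sum_filter, Finset.sum_const, nsmul_eq_mul]
          have : (Finset.univ.filter fun m' : F => 4 * m ^ 3 = 4 * m' ^ 3).card ≤ 3 := by
            refine le_trans (Finset.card_le_card ?_) (card_pow_eq_le 3 (by norm_num) (m ^ 3))
            intro x hx
            simp only [Finset.mem_filter, Finset.mem_univ, true_and] at hx ⊢
            exact (mul_left_cancel₀ h4 hx).symm
          have h' : ((Finset.univ.filter fun m' : F => 4 * m ^ 3 = 4 * m' ^ 3).card : ℤ) ≤ 3 := by
            exact_mod_cast this
          nlinarith
      _ = 3 * l ^ 2 := by simp [← hl]; ring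
  -- The sum is unchanged under `c ↦ c e ^ 6`, via `m ↦ e ^ 2 m`.
  have hinv : ∀ e : F, e ≠ 0 → S (c * e ^ 6) = S c := by
    intro e he
    simp only [hS]
    symm
    refine Fintype.sum_bijective (fun x : F => e ^ 2 * x) ?_ _ _ fun x => ?_
    · apply Function.Injective.bijective_of_finite
      intro x y hxy
      simpa [he] using hxy
    · have : 4 * (e ^ 2 * x) ^ 3 - c * e ^ 6 = (4 * x ^ 3 - c) * (e ^ 3) ^ 2 := by ring
      rw [this, map_mul, quadraticChar_sq_one' (pow_ne_zero 3 he), mul_one]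
  have hlow : (l - 1) * S c ^ 2 ≤ ∑ e : F, S (c * e ^ 6) ^ 2 := by
    calc (l - 1) * S c ^ 2 = ∑ e ∈ Finset.univ.erase (0 : F), S (c * e ^ 6) ^ 2 := by
          rw [Finset.sum_congr rfl (g := fun _ => S c ^ 2)
            (fun e he => by rw [hinv e (Finset.ne_of_mem_erase he)])]
          rw [Finset.sum_const, Finset.card_erase_of_mem (Finset.mem_univ _), Finset.card_univ,
            nsmul_eq_mul, Nat.cast_sub Fintype.card_pos]
          simp [hl]
      _ ≤ _ := Finset.sum_le_sum_of_subset_of_nonneg (Finset.erase_subset _ _)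
          fun _ _ _ => sq_nonneg _
  have hup : ∑ e : F, S (c * e ^ 6) ^ 2 ≤ 6 * ∑ d : F, S d ^ 2 := by
    rw [← Finset.sum_fiberwise (s := Finset.univ) (g := fun e : F => c * e ^ 6), Finset.mul_sum]
    refine Finset.sum_le_sum fun d _ => ?_
    rw [Finset.sum_congr rfl (g := fun _ => S d ^ 2)
      (fun e he => by rw [(Finset.mem_filter.mp he).2]), Finset.sum_const, nsmul_eq_mul]
    have : (Finset.univ.filter fun e : F => c * e ^ 6 = d).card ≤ 6 := by
      refine le_trans (Finset.card_le_card ?_) (card_pow_eq_le 6 (by norm_num) (d / c))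
      intro x hx
      simp only [Finset.mem_filter, Finset.mem_univ, true_and] at hx ⊢
      rw [← hx]; field_simp
    have h' : ((Finset.univ.filter fun e : F => c * e ^ 6 = d).card : ℤ) ≤ 6 := by
      exact_mod_cast this
    nlinarith [sq_nonneg (S d)]
  have : (l - 1) * S c ^ 2 ≤ 18 * l ^ 2 := by linarith
  change S c ^ 2 ≤ 36 * l
  nlinarith [sq_nonneg (S c)]

/-- Large enough fields have at least a quarter of the values of `u (4 m³ - c)` nonsquare.
The size `200` is what makes the square-root bound `6 √l` smaller than `l / 2 - 3`. -/
theorem card_isSquare_cubic_le {F : Type*} [Field F] [Fintype F] [DecidableEq F]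
    (hF : ringChar F ≠ 2) (hcard : 200 ≤ Fintype.card F) (c : F) (hc : c ≠ 0) (u : F) (hu : u ≠ 0) :
    4 * (Finset.univ.filter fun m : F => IsSquare (u * (4 * m ^ 3 - c))).card
      ≤ 3 * Fintype.card F := by
  have h4 : (4 : F) ≠ 0 := by
    have : (2 : F) ≠ 0 := Ring.two_ne_zero hF
    have h : (4 : F) = 2 * 2 := by norm_num
    rw [h]; exact mul_ne_zero this this
  have hS := cubic_sum_sq_le hF c hc
  set S := ∑ m : F, quadraticChar F (4 * m ^ 3 - c) with hSd
  set l : ℤ := (Fintype.card F : ℤ) with hl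
  have hl200 : 200 ≤ l := by omega
  have hpt : ∀ m : F, (if IsSquare (u * (4 * m ^ 3 - c)) then (2 : ℤ) else 0) ≤
      1 + quadraticChar F u * quadraticChar F (4 * m ^ 3 - c)
        + if m ^ 3 = c / 4 then 1 else 0 := by
    intro m
    rw [← map_mul]
    by_cases h0 : 4 * m ^ 3 - c = 0
    · have : m ^ 3 = c / 4 := by field_simp; linear_combination h0
      rw [if_pos this, h0, mul_zero, quadraticChar_zero]
      split_ifs <;> norm_num
    · have : m ^ 3 ≠ c / 4 := by
        intro h; apply h0; rw [h]; field_simp; ring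
      have hne : u * (4 * m ^ 3 - c) ≠ 0 := mul_ne_zero hu h0
      by_cases hs : IsSquare (u * (4 * m ^ 3 - c))
      · have := (quadraticChar_one_iff_isSquare hne).mpr hs
        simp [hs, this, -map_mul]; split_ifs <;> norm_num
      · have := (quadraticChar_neg_one_iff_not_isSquare).mpr hs
        simp [hs, this, -map_mul]; split_ifs <;> norm_num
  have hsum := Finset.sum_le_sum (s := Finset.univ) fun m _ => hpt m
  rw [Finset.sum_add_distrib, Finset.sum_add_distrib, ← Finset.mul_sum, ← hSd,
    ← Finset.sum_filter, ← Finset.sum_filter] at hsum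
  simp only [Finset.sum_const, nsmul_eq_mul, mul_one, Finset.card_univ] at hsum
  have h3 : ((Finset.univ.filter fun m : F => m ^ 3 = c / 4).card : ℤ) ≤ 3 := by
    exact_mod_cast card_pow_eq_le 3 (by norm_num) (c / 4)
  have habs : |S| ≤ l / 2 - 3 := by
    apply abs_le_of_sq_le_sq _ (by omega)
    have h5 : l ≤ 2 * (l / 2) + 1 := by omega
    have h6 : 100 ≤ l / 2 := by omega
    nlinarith
  have hchi : quadraticChar F u * S ≤ l / 2 - 3 := by
    have := abs_le.mp habs
    rcases quadraticChar_dichotomy hu with h | h <;> rw [h] <;> linarith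
  rw [← hl] at hsum
  have : (4 * (Finset.univ.filter fun m : F => IsSquare (u * (4 * m ^ 3 - c))).card : ℤ)
      ≤ 3 * l := by
    omega
  rw [hl] at this
  exact_mod_cast this

theorem card_isSquare_le {F : Type*} [Field F] [Fintype F] [DecidableEq F]
    (hF : ringChar F ≠ 2) (hcard : 200 ≤ Fintype.card F) :
    4 * (Finset.univ.filter fun m : F => IsSquare m).card ≤ 3 * Fintype.card F := by
  have hpt : ∀ m : F, (if IsSquare m then (2 : ℤ) else 0) ≤
      1 + quadraticChar F m + if m = 0 then 1 else 0 := by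
    intro m
    by_cases h0 : m = 0
    · simp [h0]
    · by_cases hs : IsSquare m
      · have := (quadraticChar_one_iff_isSquare h0).mpr hs
        simp [hs, this, h0]
      · have := (quadraticChar_neg_one_iff_not_isSquare).mpr hs
        simp [hs, this, h0]
  have hsum := Finset.sum_le_sum (s := Finset.univ) fun m _ => hpt m
  rw [Finset.sum_add_distrib, Finset.sum_add_distrib, ← Finset.sum_filter, ← Finset.sum_filter,
    quadraticChar_sum_zero hF] at hsum
  simp [-Finset.sum_boole] at hsum
  have h1 : (Finset.univ.filter fun a : F => a = 0).card = 1 := by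
    rw [Finset.filter_eq', if_pos (Finset.mem_univ _), Finset.card_singleton]
  rw [h1] at hsum
  zify at hcard ⊢
  push_cast at hsum
  linarith

/-- If `q b = 4 m³ - c`, the polynomial below is `(4 (m + W q s)³ - c) / q` with the division
carried out formally. It makes sense also when `q = 0` in the field, where it is linear in `s`; in
either case it is a square for at most three quarters of the `s`. -/
theorem card_isSquare_quotient_le {F : Type*} [Field F] [Fintype F] [DecidableEq F]
    (hF : ringChar F ≠ 2) (hcard : 200 ≤ Fintype.card F) (h12 : (12 : F) ≠ 0)
    {c W q b m : F} (hc : c ≠ 0) (hW : W ≠ 0) (hb : 4 * m ^ 3 - c = q * b) :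
    4 * (Finset.univ.filter fun s : F => IsSquare
      (b + 12 * m ^ 2 * W * s + 12 * m * W ^ 2 * q * s ^ 2 + 4 * W ^ 3 * q ^ 2 * s ^ 3)).card
      ≤ 3 * Fintype.card F := by
  by_cases hq : q = 0
  · have hm : m ≠ 0 := by
      rintro rfl
      apply hc
      rw [hq] at hb
      linear_combination -hb
    have hk : 12 * m ^ 2 * W ≠ 0 := mul_ne_zero (mul_ne_zero h12 (pow_ne_zero 2 hm)) hW
    refine le_trans (Nat.mul_le_mul_left 4 ?_) (card_isSquare_le hF hcard)
    refine Finset.card_le_card_of_injOn (fun s => b + 12 * m ^ 2 * W * s) ?_ ?_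
    · intro s hs
      simpa [hq] using hs
    · intro s _ s' _ h
      simpa [hk] using h
  · have hk : W * q ≠ 0 := mul_ne_zero hW hq
    refine le_trans (Nat.mul_le_mul_left 4 ?_)
      (card_isSquare_cubic_le hF hcard c hc q⁻¹ (inv_ne_zero hq))
    refine Finset.card_le_card_of_injOn (fun s => m + W * q * s) ?_ ?_
    · intro s hs
      simp only [Finset.coe_filter, Finset.mem_univ, true_and, Set.mem_ofPred_eq] at hs ⊢
      convert hs using 1
      field_simp
      linear_combination hb
    · intro s _ s' _ h
      simpa using mul_left_cancel₀ hk (add_left_cancel h)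

/-! ### The values `F n t` and the square sieve -/

/-- The values of `4 m ^ 3 - 27 n ^ 2` along `m = 1 + 6 n ^ 2 t`. For odd `n` this choice of
progression makes them coprime to `6 n`. -/
def F (n : ℤ) (t : ℕ) : ℤ := 4 * (1 + 6 * n ^ 2 * t) ^ 3 - 27 * n ^ 2

theorem F_ediv (n : ℤ) (a q : ℕ) (hq : 0 < q) (b : ℤ) (hb : F n a = q * b) (s : ℕ) :
    F n (a + q * s) / q = b + 12 * (1 + 6 * n ^ 2 * a) ^ 2 * (6 * n ^ 2) * s
      + 12 * (1 + 6 * n ^ 2 * a) * (6 * n ^ 2) ^ 2 * q * s ^ 2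
      + 4 * (6 * n ^ 2) ^ 3 * q ^ 2 * s ^ 3 := by
  apply Int.ediv_eq_of_eq_mul_right (by exact_mod_cast hq.ne')
  unfold F at *
  push_cast
  linear_combination hb

theorem F_periodic (n : ℤ) (a q l : ℕ) (hq : 0 < q) (ha : (q : ℤ) ∣ F n a) (s : ℕ) :
    ((F n (a + q * (s + l)) / q : ℤ) : ZMod l) = ((F n (a + q * s) / q : ℤ) : ZMod l) := by
  obtain ⟨b, hb⟩ := ha
  have key := F_ediv n a q hq b hb
  rw [key, key]
  push_cast
  simp

theorem card_range_isSquare_le (n : ℤ) (a q l : ℕ) (hl : l.Prime) (h200 : 200 ≤ l)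
    (hln : ¬ (l : ℤ) ∣ n) (hq : 0 < q) (ha : (q : ℤ) ∣ F n a) :
    4 * Nat.card {s : ℕ // s < l ∧ IsSquare ((F n (a + q * s) / q : ℤ) : ZMod l)} ≤ 3 * l := by
  have := Fact.mk hl
  obtain ⟨b, hb⟩ := ha
  have key := F_ediv n a q hq b hb
  have hn0 : (n : ZMod l) ≠ 0 := by
    rwa [Ne, ZMod.intCast_zmod_eq_zero_iff_dvd]
  have hnum : ∀ k : ℕ, 0 < k → k < 200 → (k : ZMod l) ≠ 0 := by
    intro k hk hk2
    rw [Ne, ZMod.natCast_eq_zero_iff]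
    intro h
    have := Nat.le_of_dvd hk h
    omega
  have h12 : (12 : ZMod l) ≠ 0 := by exact_mod_cast hnum 12 (by norm_num) (by norm_num)
  have h6 : (6 : ZMod l) ≠ 0 := by exact_mod_cast hnum 6 (by norm_num) (by norm_num)
  have h27 : (27 : ZMod l) ≠ 0 := by exact_mod_cast hnum 27 (by norm_num) (by norm_num)
  have hF : ringChar (ZMod l) ≠ 2 := by
    rw [ZMod.ringChar_zmod_n]; omega
  have hbZ : 4 * (1 + 6 * (n : ZMod l) ^ 2 * a) ^ 3 - 27 * (n : ZMod l) ^ 2 = q * b := by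
    unfold F at hb
    exact_mod_cast congrArg (Int.cast : ℤ → ZMod l) hb
  have main := card_isSquare_quotient_le hF (by rw [ZMod.card]; exact h200) h12
    (mul_ne_zero h27 (pow_ne_zero 2 hn0)) (mul_ne_zero h6 (pow_ne_zero 2 hn0)) hbZ
  rw [ZMod.card] at main
  refine le_trans (Nat.mul_le_mul_left 4 ?_) main
  rw [← Fintype.card_coe, ← Nat.card_eq_fintype_card]
  refine Nat.card_le_card_of_injective (fun s => ⟨(s.1 : ZMod l), ?_⟩) ?_
  · have := s.2.2
    rw [key] at this
    simp only [Finset.mem_filter, Finset.mem_univ, true_and]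
    exact_mod_cast this
  · rintro ⟨s, hs⟩ ⟨s', hs'⟩ h
    have := (ZMod.natCast_eq_natCast_iff' _ _ _).mp (Subtype.mk.inj h)
    rw [Nat.mod_eq_of_lt hs.1, Nat.mod_eq_of_lt hs'.1] at this
    exact Subtype.ext this

open Finset in
/-- Sieving by the Chinese remainder theorem: conditions `G l` which depend on `s` modulo `l`
and keep at most three quarters of the residues keep jointly at most `(3/4) ^ #P` of the residues
modulo the product of the primes in `P`. -/
theorem card_sieve_le (G : ℕ → ℕ → Prop) (P : Finset ℕ) (hP : ∀ l ∈ P, l.Prime)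
    (hper : ∀ l ∈ P, ∀ s, G l (s + l) ↔ G l s)
    (hG : ∀ l ∈ P, 4 * Nat.card {s : ℕ // s < l ∧ G l s} ≤ 3 * l) :
    4 ^ P.card * Nat.card {s : ℕ // s < ∏ l ∈ P, l ∧ ∀ l ∈ P, G l s} ≤ 3 ^ P.card * ∏ l ∈ P, l := by
  induction P using Finset.induction_on with
  | empty =>
    simp
  | insert l P hl ih =>
    have hmod : ∀ l' ∈ insert l P, ∀ M s, l' ∣ M → (G l' (s % M) ↔ G l' s) := by
      intro l' hl' M s hM
      have hmul : ∀ k s, G l' (s + l' * k) ↔ G l' s := by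
        intro k
        induction k with
        | zero => simp
        | succ k ihk =>
          intro s
          rw [Nat.mul_succ, ← Nat.add_assoc, hper l' hl', ihk]
      obtain ⟨d, rfl⟩ := hM
      conv_rhs => rw [← Nat.mod_add_div s (l' * d), Nat.mul_assoc]
      rw [hmul]
    have ih' := ih (fun l' h => hP l' (mem_insert_of_mem h))
      (fun l' h => hper l' (mem_insert_of_mem h)) (fun l' h => hG l' (mem_insert_of_mem h))
    have hGl := hG l (mem_insert_self _ _)
    have hcop : l.Coprime (∏ l' ∈ P, l') := by
      apply Nat.Coprime.prod_right
      intro l' hl'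
      refine (Nat.coprime_primes (hP l (mem_insert_self _ _)) (hP l' (mem_insert_of_mem hl'))).mpr ?_
      rintro rfl; exact hl hl'
    rw [card_insert_of_notMem hl, prod_insert hl]
    set L := ∏ l' ∈ P, l' with hL
    have hlpos : 0 < l := (hP l (mem_insert_self _ _)).pos
    have hLpos : 0 < L := prod_pos fun l' h => (hP l' (mem_insert_of_mem h)).pos
    have hle : Nat.card {s : ℕ // s < l * L ∧ ∀ l' ∈ insert l P, G l' s} ≤
        Nat.card {s : ℕ // s < l ∧ G l s} * Nat.card {s : ℕ // s < L ∧ ∀ l' ∈ P, G l' s} := by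
      rw [← Nat.card_prod]
      have : Finite {s : ℕ // s < l ∧ G l s} :=
        Set.Finite.subset (Set.finite_lt_nat l) fun s hs => hs.1
      have : Finite {s : ℕ // s < L ∧ ∀ l' ∈ P, G l' s} :=
        Set.Finite.subset (Set.finite_lt_nat L) fun s hs => hs.1
      refine Nat.card_le_card_of_injective (fun s =>
        (⟨s.1 % l, Nat.mod_lt _ hlpos, (hmod l (mem_insert_self _ _) _ _ dvd_rfl).mpr
          (s.2.2 l (mem_insert_self _ _))⟩,
         ⟨s.1 % L, Nat.mod_lt _ hLpos, fun l' h' =>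
          (hmod l' (mem_insert_of_mem h') _ _ (dvd_prod_of_mem _ h')).mpr
            (s.2.2 l' (mem_insert_of_mem h'))⟩)) ?_
      rintro ⟨s, hs⟩ ⟨s', hs'⟩ h
      simp only [Prod.mk.injEq, Subtype.mk.injEq] at h
      have := (Nat.modEq_and_modEq_iff_modEq_mul hcop).mp h
      simp only [Subtype.mk.injEq]
      exact this.eq_of_lt_of_lt hs.1 hs'.1
    calc 4 ^ (P.card + 1) * Nat.card {s : ℕ // s < l * L ∧ ∀ l' ∈ insert l P, G l' s}
        ≤ 4 ^ (P.card + 1) * (Nat.card {s : ℕ // s < l ∧ G l s} *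
            Nat.card {s : ℕ // s < L ∧ ∀ l' ∈ P, G l' s}) := Nat.mul_le_mul_left _ hle
      _ = (4 * Nat.card {s : ℕ // s < l ∧ G l s}) *
          (4 ^ P.card * Nat.card {s : ℕ // s < L ∧ ∀ l' ∈ P, G l' s}) := by ring
      _ ≤ (3 * l) * (3 ^ P.card * L) := Nat.mul_le_mul hGl ih'
      _ = _ := by ring

open Finset in
theorem card_filter_Ico_mul_le (p : ℕ → Prop) [DecidablePred p] (L : ℕ) (hp : ∀ s, p (s + L) ↔ p s)
    (R s₀ : ℕ) : ((Ico s₀ (s₀ + R * L)).filter p).card ≤ R * L.count p := by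
  induction R with
  | zero => simp
  | succ R ih =>
    have h : Ico s₀ (s₀ + (R + 1) * L) ⊆
        Ico s₀ (s₀ + R * L) ∪ Ico (s₀ + R * L) (s₀ + R * L + L) := by
      intro x
      simp only [mem_union, mem_Ico, add_mul, one_mul]
      omega
    refine (card_le_card (filter_subset_filter p h)).trans ?_
    rw [filter_union]
    refine (card_union_le _ _).trans ?_
    rw [Nat.filter_Ico_card_eq_of_periodic _ _ _ (fun s => propext (hp s))]
    linarith

open Finset in
open scoped Classical in
/-- For fixed `q` and `a` with `q ∣ F n a`, the integers `t ≡ a (mod q)` in `[N, 2N)` with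
`F n t / q` a square are sieved by the primes in `P`: a square is a square modulo each of them. -/
theorem card_fiber_le (n : ℤ) (N q a : ℕ) (hq : 0 < q) (hqN : q ≤ N)
    (ha : (q : ℤ) ∣ F n a) (P : Finset ℕ)
    (hP : ∀ l ∈ P, l.Prime ∧ 200 ≤ l ∧ ¬ (l : ℤ) ∣ n) (hprod : ∏ l ∈ P, l ≤ N / q) :
    4 ^ P.card * ((Ico N (2 * N)).filter fun t : ℕ => t % q = a ∧ IsSquare (F n t / q)).card
      ≤ 3 ^ P.card * (3 * (N / q)) := by
  set T := N / q with hT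
  set L := ∏ l ∈ P, l with hL
  have hT1 : 1 ≤ T := Nat.div_pos hqN hq
  have hLpos : 0 < L := prod_pos fun l h => (hP l h).1.pos
  set G : ℕ → ℕ → Prop := fun l s => IsSquare ((F n (a + q * s) / q : ℤ) : ZMod l) with hG
  have hper : ∀ l s, G l (s + l) ↔ G l s := by
    intro l s
    simp only [hG]
    rw [F_periodic n a q l hq ha s]
  have hs := card_sieve_le G P (fun l h => (hP l h).1) (fun l _ => hper l)
    (fun l h => card_range_isSquare_le n a q l (hP l h).1 (hP l h).2.1 (hP l h).2.2 hq ha)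
  have hcount : Nat.card {s : ℕ // s < L ∧ ∀ l ∈ P, G l s} = L.count fun s => ∀ l ∈ P, G l s := by
    rw [Nat.count_eq_card_filter_range, ← Fintype.card_coe, ← Nat.card_eq_fintype_card]
    exact Nat.card_congr (Equiv.subtypeEquivRight (by simp))
  rw [← hL, hcount] at hs
  set R := (T + 1) / L + 1 with hR
  have hR1 : T + 2 ≤ R * L := by
    have := Nat.lt_div_mul_add (a := T + 1) hLpos
    rw [hR, add_mul, one_mul]; omega
  have hR2 : R * L ≤ 3 * T := by
    have := Nat.div_mul_le_self (T + 1) L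
    rw [hR, add_mul, one_mul]; omega
  have hmulper : ∀ l, ∀ k s, G l (s + l * k) ↔ G l s := by
    intro l k
    induction k with
    | zero => simp
    | succ k ihk =>
      intro s
      rw [Nat.mul_succ, ← Nat.add_assoc, hper l, ihk]
  have hperL : ∀ s, (∀ l ∈ P, G l (s + L)) ↔ ∀ l ∈ P, G l s := by
    intro s
    refine forall₂_congr fun l hl => ?_
    obtain ⟨d, hd⟩ := dvd_prod_of_mem (fun l => l) hl
    rw [hL, hd]
    exact hmulper l d s
  have hcard : ((Ico N (2 * N)).filter fun t : ℕ => t % q = a ∧ IsSquare (F n t / q)).card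
      ≤ ((Ico T (T + R * L)).filter fun s => ∀ l ∈ P, G l s).card := by
    refine card_le_card_of_injOn (fun t => t / q) ?_ ?_
    · intro t ht
      simp only [coe_filter, mem_Ico, Set.mem_ofPred_eq] at ht ⊢
      obtain ⟨⟨h1, h2⟩, h3, h4⟩ := ht
      refine ⟨⟨Nat.div_le_div_right h1, ?_⟩, fun l _ => ?_⟩
      · have : t / q < 2 * T + 2 := by
          rw [Nat.div_lt_iff_lt_mul hq]
          have := Nat.lt_div_mul_add (a := N) hq
          rw [← hT] at this
          calc t < 2 * N := h2
            _ ≤ (2 * T + 2) * q := by nlinarith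
        omega
      · simp only [hG]
        have : a + q * (t / q) = t := by rw [← h3]; exact Nat.mod_add_div t q
        rw [this]
        exact h4.map (Int.castRingHom (ZMod l))
    · intro t ht t' ht' h
      simp only [coe_filter, mem_Ico, Set.mem_ofPred_eq] at ht ht' h
      rw [← Nat.mod_add_div t q, ← Nat.mod_add_div t' q, ht.2.1, ht'.2.1, h]
  have h5 := hcard.trans (card_filter_Ico_mul_le _ L hperL R T)
  calc _ ≤ 4 ^ P.card * (R * L.count fun s => ∀ l ∈ P, G l s) := Nat.mul_le_mul_left _ h5
    _ = R * (4 ^ P.card * L.count fun s => ∀ l ∈ P, G l s) := by ring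
    _ ≤ R * (3 ^ P.card * L) := Nat.mul_le_mul_left _ hs
    _ = 3 ^ P.card * (R * L) := by ring
    _ ≤ _ := Nat.mul_le_mul_left _ hR2

/-! ### Divisors of the values and ideals of a pure cubic field -/

open Polynomial NumberField in
/-- If `d 𝓞 K ⊆ ℤ[θ]` and `q` is coprime to `d`, every element of `𝓞 K` is congruent to a rational
integer modulo the ideal `(q, θ - b)`. -/
theorem exists_intCast_sub_mem {K : Type*} [Field K] [NumberField K] (θ : 𝓞 K) (d : ℤ)
    (hd : ∀ x : 𝓞 K, (d : 𝓞 K) * x ∈ Algebra.adjoin ℤ {θ}) (q b : ℤ) (hq : IsCoprime q d)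
    (x : 𝓞 K) : ∃ c : ℤ, x - c ∈ Ideal.span {(q : 𝓞 K), θ - b} := by
  have h1 : (q : 𝓞 K) ∈ Ideal.span {(q : 𝓞 K), θ - b} := Ideal.subset_span (by simp)
  have h2 : θ - b ∈ Ideal.span {(q : 𝓞 K), θ - b} := Ideal.subset_span (by simp)
  have hx := hd x
  rw [Algebra.adjoin_singleton_eq_range_aeval] at hx
  obtain ⟨P, hP⟩ := hx
  have hP' : aeval θ P = (d : 𝓞 K) * x := hP
  obtain ⟨u, v, huv⟩ := hq
  have h3 : θ - b ∣ (P.map (algebraMap ℤ (𝓞 K))).eval θ - (P.map (algebraMap ℤ (𝓞 K))).eval (b : 𝓞 K) :=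
    sub_dvd_eval_sub _ _ _
  have h4 : (P.map (algebraMap ℤ (𝓞 K))).eval (b : 𝓞 K) = ((P.eval b : ℤ) : 𝓞 K) := by
    simp
  rw [h4, eval_map_algebraMap, hP'] at h3
  obtain ⟨w, hw⟩ := h3
  refine ⟨v * P.eval b, ?_⟩
  have huv' : (u : 𝓞 K) * q + v * d = 1 := by exact_mod_cast congrArg (Int.cast : ℤ → 𝓞 K) huv
  have : x - ((v * P.eval b : ℤ) : 𝓞 K) = (u * x) * q + (v * w) * (θ - b) := by
    push_cast
    linear_combination (-x) * huv' + v * hw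
  rw [this]
  exact Ideal.add_mem _ (Ideal.mul_mem_left _ _ h1) (Ideal.mul_mem_left _ _ h2)

open Polynomial NumberField in
/-- If `d 𝓞 K ⊆ ℤ[θ]`, `q` is coprime to `d` and `b` is a root modulo `q` of the minimal polynomial
`X ^ 3 - κ` of `θ`, then the ideal `(q, θ - b)` contains no rational integers but the multiples
of `q`. -/
theorem dvd_of_intCast_mem {K : Type*} [Field K] [NumberField K] (θ : 𝓞 K) (κ d : ℤ)
    (hθ : minpoly ℤ θ = X ^ 3 - C κ)
    (hd : ∀ x : 𝓞 K, (d : 𝓞 K) * x ∈ Algebra.adjoin ℤ {θ}) (q b : ℤ) (hq : IsCoprime q d)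
    (hb : q ∣ b ^ 3 - κ) (c : ℤ) (hc : (c : 𝓞 K) ∈ Ideal.span {(q : 𝓞 K), θ - b}) : q ∣ c := by
  obtain ⟨α, β, hαβ⟩ := Ideal.mem_span_pair.mp hc
  have hα := hd α
  have hβ := hd β
  rw [Algebra.adjoin_singleton_eq_range_aeval] at hα hβ
  obtain ⟨P, hP⟩ := hα
  obtain ⟨R, hR⟩ := hβ
  have hP' : aeval θ P = (d : 𝓞 K) * α := hP
  have hR' : aeval θ R = (d : 𝓞 K) * β := hR
  have h0 : aeval θ (P * C q + R * (X - C b) - C (d * c)) = 0 := by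
    simp only [map_sub, map_add, map_mul, aeval_X, hP', hR', eq_intCast, map_intCast]
    linear_combination (d : 𝓞 K) * hαβ
  -- The polynomial in `h0` is a multiple of `X ^ 3 - κ`; its value at `b` is divisible by `q`.
  have hdvd := minpoly.isIntegrallyClosed_dvd (NumberField.RingOfIntegers.isIntegral θ) h0
  rw [hθ] at hdvd
  obtain ⟨S, hS⟩ := hdvd
  have := congrArg (eval b) hS
  simp only [eval_sub, eval_add, eval_mul, eval_C, eval_X, sub_self, mul_zero, add_zero,
    eval_pow] at this
  refine hq.dvd_of_dvd_mul_left ?_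
  obtain ⟨e, he⟩ := hb
  exact ⟨eval b P - e * eval b S, by rw [he] at this; linear_combination -this⟩

open Polynomial NumberField in
theorem absNorm_span_le {K : Type*} [Field K] [NumberField K] (θ : 𝓞 K) (d : ℤ)
    (hd : ∀ x : 𝓞 K, (d : 𝓞 K) * x ∈ Algebra.adjoin ℤ {θ}) (q : ℕ) (b : ℤ)
    (hq0 : 0 < q) (hq : IsCoprime (q : ℤ) d) :
    Ideal.absNorm (Ideal.span {((q : ℤ) : 𝓞 K), θ - b}) ≤ q := by
  set I := Ideal.span {((q : ℤ) : 𝓞 K), θ - b} with hI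
  have hqI : ((q : ℤ) : 𝓞 K) ∈ I := Ideal.subset_span (by simp)
  rw [Ideal.absNorm_apply, Submodule.cardQuot_apply]
  calc Nat.card (𝓞 K ⧸ I) ≤ Nat.card (Fin q) := by
        refine Nat.card_le_card_of_surjective
          (fun r : Fin q => Ideal.Quotient.mk I ((r : ℕ) : 𝓞 K)) ?_
        intro y
        obtain ⟨x, rfl⟩ := Ideal.Quotient.mk_surjective y
        obtain ⟨c, hc⟩ := exists_intCast_sub_mem θ d hd q b hq x
        have hq0' : (q : ℤ) ≠ 0 := by exact_mod_cast hq0.ne'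
        have h1 := Int.emod_nonneg c hq0'
        have h2 := Int.emod_lt_of_pos c (by exact_mod_cast hq0 : (0 : ℤ) < q)
        refine ⟨⟨(c % q).toNat, by omega⟩, ?_⟩
        rw [eq_comm, Ideal.Quotient.mk_eq_mk_iff_sub_mem]
        have h3 : (((c % q).toNat : ℕ) : 𝓞 K) = ((c % q : ℤ) : 𝓞 K) := by
          rw [← Int.cast_natCast, Int.toNat_of_nonneg h1]
        have h4 : x - (((c % q).toNat : ℕ) : 𝓞 K) = (x - c) + ((c / q : ℤ) : 𝓞 K) * ((q : ℤ) : 𝓞 K) := by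
          rw [h3]
          have := congrArg (Int.cast : ℤ → 𝓞 K) (Int.emod_add_mul_ediv c q)
          push_cast at this ⊢
          linear_combination -this
        simp only [h4]
        exact I.add_mem hc (I.mul_mem_left _ hqI)
    _ = q := by simp

open NumberField in
theorem exists_card_ideal_le (K : Type*) [Field K] [NumberField K] :
    ∃ C : ℝ, 0 < C ∧ ∀ Q : ℕ, 0 < Q →
      (Nat.card {I : Ideal (𝓞 K) // Ideal.absNorm I ≤ Q} : ℝ) ≤ C * Q := by
  have h := (NumberField.Ideal.tendsto_norm_le_div_atTop K).comp tendsto_natCast_atTop_atTop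
  obtain ⟨C, hC⟩ := h.bddAbove_range
  refine ⟨max C 1, by positivity, fun Q hQ => ?_⟩
  have h1 : _ ≤ C := hC ⟨Q, rfl⟩
  have hQ' : (0 : ℝ) < Q := by exact_mod_cast hQ
  simp only [Function.comp, Nat.cast_le] at h1
  rw [div_le_iff₀ hQ'] at h1
  exact h1.trans (mul_le_mul_of_nonneg_right (le_max_left _ _) hQ'.le)

/-- The Bézout identities below use `n² = 1 + 4 (k² + k)` for `n = 2k + 1`. -/
theorem isCoprime_F (n : ℤ) (hn : Odd n) (t : ℕ) : IsCoprime (F n t) (6 * n) := by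
  obtain ⟨k, hk⟩ := hn
  have hk2 : n * n = 1 + 4 * (k ^ 2 + k) := by rw [hk]; ring
  have h2 : IsCoprime (F n t) 2 :=
    ⟨1, -(2 * (1 + 6 * n ^ 2 * t) ^ 3 - 14 * n ^ 2 + 2 * (k ^ 2 + k)), by
      unfold F; linear_combination hk2⟩
  have h3 : IsCoprime (F n t) 3 := by
    refine ⟨1, -(1 + 4 * (3 * (2 * n ^ 2 * t) + 9 * (2 * n ^ 2 * t) ^ 2 + 9 * (2 * n ^ 2 * t) ^ 3)
      - 9 * n ^ 2), ?_⟩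
    unfold F; ring
  have hn : IsCoprime (F n t) n := by
    refine ⟨-(k ^ 2 + k), -(k ^ 2 + k) * (27 * n - 4 * (3 * (6 * n * t) + 3 * n * (6 * n * t) ^ 2
      + n ^ 2 * (6 * n * t) ^ 3)) + n, ?_⟩
    unfold F; linear_combination hk2
  have h6 : IsCoprime (F n t) (2 * 3 * n) := (h2.mul_right h3).mul_right hn
  norm_num at h6
  exact h6

theorem two_mul_F (n : ℤ) (t : ℕ) :
    2 * F n t = (2 * (1 + 6 * n ^ 2 * t)) ^ 3 - 54 * n ^ 2 := by
  unfold F; ring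

open Polynomial NumberField in
/-- The map `(q, a) ↦ (q, θ - 2 (1 + 6n²a))` sends the pairs with `a < q ∣ F n a` injectively to
ideals of norm at most `q`: the ideal determines `q` as the generator of its intersection with `ℤ`,
and then determines `a` modulo `q`, since `12 n²` is invertible modulo `q`. -/
theorem card_pairs_le_of_ring {K : Type*} [Field K] [NumberField K] (n : ℤ) (hn : Odd n)
    (θ : 𝓞 K) (hθ : minpoly ℤ θ = X ^ 3 - C (54 * n ^ 2))
    (hd : ∀ x : 𝓞 K, (((6 * n) ^ 9 : ℤ) : 𝓞 K) * x ∈ Algebra.adjoin ℤ {θ}) (Q : ℕ) :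
    ((Finset.Icc 1 Q ×ˢ Finset.range Q).filter
      fun p : ℕ × ℕ => p.2 < p.1 ∧ (p.1 : ℤ) ∣ F n p.2).card ≤
    Nat.card {I : Ideal (𝓞 K) // Ideal.absNorm I ≤ Q} := by
  have hcop : ∀ q a : ℕ, (q : ℤ) ∣ F n a → IsCoprime (q : ℤ) (6 * n) := fun q a h =>
    (isCoprime_F n hn a).of_isCoprime_of_dvd_left h
  have hfin : Finite {I : Ideal (𝓞 K) // Ideal.absNorm I ≤ Q} :=
    (Ideal.finite_setOfPred_absNorm_le Q).to_subtype
  rw [← Fintype.card_coe, ← Nat.card_eq_fintype_card]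
  refine Nat.card_le_card_of_injective (fun p =>
    ⟨Ideal.span {((p.1.1 : ℤ) : 𝓞 K), θ - ((2 * (1 + 6 * n ^ 2 * p.1.2) : ℤ) : 𝓞 K)}, ?_⟩) ?_
  · obtain ⟨⟨q, a⟩, h⟩ := p
    simp only [Finset.mem_filter, Finset.mem_product, Finset.mem_Icc] at h
    exact (absNorm_span_le θ _ hd q _ h.1.1.1 ((hcop q a h.2.2).pow_right)).trans h.1.1.2
  · rintro ⟨⟨q, a⟩, h⟩ ⟨⟨q', a'⟩, h'⟩ heq
    simp only [Finset.mem_filter, Finset.mem_product, Finset.mem_Icc] at h h'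
    have heq := Subtype.mk.inj heq
    simp only at heq
    have hroot : ∀ q a : ℕ, (q : ℤ) ∣ F n a →
        (q : ℤ) ∣ (2 * (1 + 6 * n ^ 2 * a)) ^ 3 - 54 * n ^ 2 := by
      intro q a h
      rw [← two_mul_F]
      exact h.mul_left 2
    have key := fun c => dvd_of_intCast_mem θ _ _ hθ hd q _ (hcop q a h.2.2).pow_right
      (hroot q a h.2.2) c
    have key' := fun c => dvd_of_intCast_mem θ _ _ hθ hd q' _ (hcop q' a' h'.2.2).pow_right
      (hroot q' a' h'.2.2) c
    have h1 : (q : ℤ) ∣ q' := key _ (by rw [heq]; exact Ideal.subset_span (by simp))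
    have h2 : (q' : ℤ) ∣ q := key' _ (by rw [← heq]; exact Ideal.subset_span (by simp))
    have hqq : q = q' := Nat.dvd_antisymm (by exact_mod_cast h1) (by exact_mod_cast h2)
    subst hqq
    have h3 : (q : ℤ) ∣ 2 * (1 + 6 * n ^ 2 * a) - 2 * (1 + 6 * n ^ 2 * a') := by
      apply key
      have e1 : θ - ((2 * (1 + 6 * n ^ 2 * a) : ℤ) : 𝓞 K) ∈ Ideal.span {((q : ℤ) : 𝓞 K),
          θ - ((2 * (1 + 6 * n ^ 2 * a) : ℤ) : 𝓞 K)} := Ideal.subset_span (by simp)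
      have e2 : θ - ((2 * (1 + 6 * n ^ 2 * a') : ℤ) : 𝓞 K) ∈ Ideal.span {((q : ℤ) : 𝓞 K),
          θ - ((2 * (1 + 6 * n ^ 2 * a) : ℤ) : 𝓞 K)} := by
        rw [heq]; exact Ideal.subset_span (by simp)
      have e3 := Ideal.sub_mem _ e2 e1
      convert e3 using 1
      push_cast
      ring
    have h4 : (q : ℤ) ∣ (6 * n) * (2 * n * (a - a')) := by
      have e : (6 * n) * (2 * n * ((a : ℤ) - a')) =
          2 * (1 + 6 * n ^ 2 * a) - 2 * (1 + 6 * n ^ 2 * a') := by ring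
      rw [e]; exact h3
    have h5 := (hcop q a h.2.2).dvd_of_dvd_mul_left h4
    have h6 : (q : ℤ) ∣ (6 * n) * (a - a') := by
      have e : (6 * n) * ((a : ℤ) - a') = 3 * (2 * n * (a - a')) := by ring
      rw [e]; exact h5.mul_left 3
    have h7 := (hcop q a h.2.2).dvd_of_dvd_mul_left h6
    have h8 : a' ≡ a [MOD q] := (Nat.modEq_iff_dvd).mpr h7
    have h9 := h8.eq_of_lt_of_lt h'.2.1 h.2.1
    subst h9
    rfl

open Polynomial NumberField in
/-- In the pure cubic field of `54 n²`, the discriminant of `ℤ[θ]` is `-27 (54 n²)²`, which divides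
`(6n) ^ 9`; hence `(6n) ^ 9` carries the ring of integers into `ℤ[θ]`. -/
theorem exists_generator_of_powerBasis {K : Type*} [Field K] [NumberField K] (n : ℤ)
    (pb : PowerBasis ℚ K) (hmin : minpoly ℚ pb.gen = X ^ 3 - C ((54 * n ^ 2 : ℤ) : ℚ)) :
    ∃ θ : 𝓞 K, minpoly ℤ θ = X ^ 3 - C (54 * n ^ 2) ∧
      ∀ x : 𝓞 K, (((6 * n) ^ 9 : ℤ) : 𝓞 K) * x ∈ Algebra.adjoin ℤ {θ} := by
  set κ : ℤ := 54 * n ^ 2 with hκ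
  have hroot : pb.gen ^ 3 = ((κ : ℤ) : K) := by
    have h := minpoly.aeval ℚ pb.gen
    rw [hmin, map_sub, map_pow, aeval_X, aeval_C, sub_eq_zero, map_intCast] at h
    exact h
  have hgi : IsIntegral ℤ pb.gen := by
    refine ⟨X ^ 3 - C κ, monic_X_pow_sub_C _ (by norm_num), ?_⟩
    rw [← aeval_def, map_sub, map_pow, aeval_X, aeval_C, hroot, algebraMap_int_eq, eq_intCast,
      sub_self]
  let θ : 𝓞 K := ⟨pb.gen, hgi⟩
  have hθ : minpoly ℤ θ = X ^ 3 - C κ := by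
    have h1 : minpoly ℤ θ = minpoly ℤ pb.gen :=
      (minpoly.algebraMap_eq (RingOfIntegers.coe_injective (K := K)) θ).symm
    have h2 := minpoly.isIntegrallyClosed_eq_field_fractions' ℚ hgi
    rw [hmin] at h2
    rw [h1]
    apply map_injective (algebraMap ℤ ℚ) (algebraMap ℤ ℚ).injective_int
    rw [← h2]
    simp
  have hdisc : ∃ ε : ℤ, ε * Algebra.discr ℚ pb.basis = ((6 * n) ^ 9 : ℤ) := by
    have hfr : Module.finrank ℚ K = 3 := by
      rw [pb.finrank]
      rw [← pb.natDegree_minpoly, hmin]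
      exact natDegree_X_pow_sub_C
    have hnorm : Algebra.norm ℚ pb.gen = κ := by
      rw [Algebra.PowerBasis.norm_gen_eq_coeff_zero_minpoly, hmin, ← pb.finrank, hfr]
      simp
      norm_num
    have hder : aeval pb.gen (derivative (minpoly ℚ pb.gen)) =
        algebraMap ℚ K 3 * pb.gen ^ 2 := by
      rw [hmin, derivative_sub, derivative_X_pow, derivative_C, sub_zero, map_mul, map_pow,
        aeval_X, aeval_C]
      norm_num
    refine ⟨-128 * n ^ 5, ?_⟩
    rw [Algebra.discr_powerBasis_eq_norm, hder, hfr, map_mul, map_pow, hnorm,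
      Algebra.norm_algebraMap, hfr, hκ]
    push_cast
    norm_num
    ring
  have hd : ∀ x : 𝓞 K, (((6 * n) ^ 9 : ℤ) : 𝓞 K) * x ∈ Algebra.adjoin ℤ {θ} := by
    intro x
    obtain ⟨ε, hε⟩ := hdisc
    have h := Algebra.discr_mul_isIntegral_mem_adjoin ℚ hgi (RingOfIntegers.isIntegral_coe x)
    have h' := Subalgebra.smul_mem _ h ε
    rw [Algebra.adjoin_singleton_eq_range_aeval] at h' ⊢
    obtain ⟨P, hP⟩ := h'
    refine ⟨P, ?_⟩
    have hP' : aeval pb.gen P = ε • Algebra.discr ℚ pb.basis • (x : K) := hP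
    have he : ε • Algebra.discr ℚ pb.basis • (x : K) = (((6 * n) ^ 9 : ℤ) : K) * x := by
      have := congrArg (algebraMap ℚ K) hε
      rw [map_intCast] at this
      rw [← this, map_mul, map_intCast, zsmul_eq_mul, Algebra.smul_def, mul_assoc]
    apply RingOfIntegers.coe_injective (K := K)
    have h3 : algebraMap (𝓞 K) K (aeval θ P) = aeval pb.gen P :=
      (aeval_algebraMap_apply K θ P).symm
    refine h3.trans (hP'.trans (he.trans ?_))
    rw [map_mul, map_intCast]
  exact ⟨θ, hθ, hd⟩

open Polynomial NumberField in
/-- The pairs `(q, a)` with `a < q ≤ Q` and `q ∣ F n a` number `O(Q)`, because ideals of norm at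
most `Q` in the field generated by a cube root of `54 n²` do. -/
theorem exists_card_pairs_le (n : ℤ) (hn : Odd n) :
    ∃ C : ℝ, 0 < C ∧ ∀ Q : ℕ, 0 < Q →
    (((Finset.Icc 1 Q ×ˢ Finset.range Q).filter
      fun p : ℕ × ℕ => p.2 < p.1 ∧ (p.1 : ℤ) ∣ F n p.2).card : ℝ) ≤ C * Q := by
  have hn0 : n ≠ 0 := by rintro rfl; simp at hn
  set κ : ℤ := 54 * n ^ 2 with hκ
  have hirr : Irreducible (X ^ 3 - C (κ : ℚ) : ℚ[X]) := by
    apply X_pow_sub_C_irreducible_of_prime Nat.prime_three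
    intro b hb
    -- `54 n²` is not a cube, as its 2-adic valuation is `1`.
    have hb0 : b ≠ 0 := by
      rintro rfl
      have : (54 : ℚ) * n ^ 2 = 0 := by
        rw [hκ] at hb; push_cast at hb; rw [← hb]; norm_num
      have : (n : ℚ) ≠ 0 := by exact_mod_cast hn0
      simp_all
    have hval := congrArg (padicValRat 2) hb
    have h27 : padicValRat 2 ((27 * n ^ 2 : ℤ) : ℚ) = 0 := by
      rw [padicValRat.of_int]
      have : ¬ (2 : ℤ) ∣ 27 * n ^ 2 := by
        rw [← even_iff_two_dvd, Int.not_even_iff_odd]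
        exact (by decide : Odd (27 : ℤ)).mul hn.pow
      exact_mod_cast padicValInt.eq_zero_of_not_dvd (by exact_mod_cast this)
    have hsplit : (κ : ℚ) = 2 * ((27 * n ^ 2 : ℤ) : ℚ) := by rw [hκ]; push_cast; ring
    have h27' : ((27 * n ^ 2 : ℤ) : ℚ) ≠ 0 := by
      have : (27 * n ^ 2 : ℤ) ≠ 0 := by positivity
      exact_mod_cast this
    have h2 : padicValRat 2 (2 : ℚ) = 1 := by
      exact_mod_cast padicValRat.self (p := 2) (by norm_num)
    rw [hsplit, padicValRat.mul two_ne_zero h27', h27, h2, padicValRat.pow] at hval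
    push_cast at hval
    omega
  have hmonic : (X ^ 3 - C (κ : ℚ) : ℚ[X]).Monic := monic_X_pow_sub_C _ (by norm_num)
  have := Fact.mk hirr
  let K := AdjoinRoot (X ^ 3 - C (κ : ℚ) : ℚ[X])
  let pb : PowerBasis ℚ K := AdjoinRoot.powerBasis hirr.ne_zero
  have : FiniteDimensional ℚ K := pb.finite
  have : CharZero K := algebraRat.charZero K
  have : NumberField K := ⟨⟩
  have hgen : pb.gen = AdjoinRoot.root (X ^ 3 - C (κ : ℚ) : ℚ[X]) := rfl
  have hmin : minpoly ℚ pb.gen = X ^ 3 - C (κ : ℚ) := by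
    refine (minpoly.eq_of_irreducible_of_monic hirr ?_ hmonic).symm
    exact (AdjoinRoot.aeval_eq _).trans AdjoinRoot.mk_self
  obtain ⟨θ, hθ, hd⟩ := exists_generator_of_powerBasis n pb hmin
  obtain ⟨C, hC, h⟩ := exists_card_ideal_le K
  refine ⟨C, hC, fun Q hQ => le_trans ?_ (h Q hQ)⟩
  exact_mod_cast card_pairs_le_of_ring n hn θ hθ hd Q

/-! ### Divisibility by the square of a given prime -/

open Finset in
/-- For a prime `p` not dividing `6n`, there are at most three residues `t` modulo `p²` with
`p² ∣ F n t`: the values `1 + 6n²t` are units whose quotients are cube roots of unity in the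
cyclic group of units modulo `p²`. -/
theorem count_sq_dvd_le (n : ℤ) (p : ℕ) (hp : p.Prime) (hpn : ¬ (p : ℤ) ∣ 6 * n) :
    Nat.count (fun t => ((p : ℤ) ^ 2) ∣ F n t) (p ^ 2) ≤ 3 := by
  classical
  have hpZ : Prime (p : ℤ) := Nat.prime_iff_prime_int.mp hp
  have hp2 : p ≠ 2 := by
    rintro rfl
    exact hpn ⟨3 * n, by push_cast; ring⟩
  have hp3 : p ≠ 3 := by
    rintro rfl
    exact hpn ⟨2 * n, by push_cast; ring⟩
  have hn : ¬ (p : ℤ) ∣ n := fun h => hpn (h.mul_left 6)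
  have hcop : ∀ z : ℤ, ¬ (p : ℤ) ∣ z → IsUnit ((z : ℤ) : ZMod (p ^ 2)) := by
    intro z hz
    rw [ZMod.coe_int_isUnit_iff_isCoprime]
    push_cast
    exact ((hpZ.coprime_iff_not_dvd).mpr hz).pow_left
  have hsmall : ∀ r : ℕ, r.Prime → p ≠ r → ¬ (p : ℤ) ∣ r := fun r hr hne h =>
    hne ((Nat.prime_dvd_prime_iff_eq hp hr).mp (by exact_mod_cast h))
  have h2 : ¬ (p : ℤ) ∣ 2 := by exact_mod_cast hsmall 2 Nat.prime_two hp2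
  have h3 : ¬ (p : ℤ) ∣ 3 := by exact_mod_cast hsmall 3 Nat.prime_three hp3
  have h4 : IsUnit ((4 : ℤ) : ZMod (p ^ 2)) := by
    apply hcop
    intro h
    exact h2 (by simpa using hpZ.dvd_of_dvd_pow (show (p : ℤ) ∣ 2 ^ 2 by norm_num; exact h))
  have hm : ∀ t : ℕ, ((p : ℤ) ^ 2) ∣ F n t → IsUnit ((1 + 6 * n ^ 2 * t : ℤ) : ZMod (p ^ 2)) := by
    intro t ht
    apply hcop
    intro h
    have h1 : (p : ℤ) ∣ F n t := (dvd_pow_self _ two_ne_zero).trans ht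
    have h5 : (p : ℤ) ∣ 3 ^ 3 * n ^ 2 := by
      have : 3 ^ 3 * n ^ 2 = 4 * (1 + 6 * n ^ 2 * t) ^ 3 - F n t := by unfold F; ring
      rw [this]
      exact dvd_sub ((h.pow three_ne_zero).mul_left 4) h1
    rcases hpZ.dvd_or_dvd h5 with h6 | h6
    · exact h3 (hpZ.dvd_of_dvd_pow h6)
    · exact hn (hpZ.dvd_of_dvd_pow h6)
  have : NeZero (p ^ 2) := ⟨(pow_pos hp.pos 2).ne'⟩
  have hcyc : IsCyclic (ZMod (p ^ 2))ˣ := ZMod.isCyclic_units_of_prime_pow p hp hp2 2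
  rw [Nat.count_eq_card_filter_range]
  rcases ((range (p ^ 2)).filter fun t => ((p : ℤ) ^ 2) ∣ F n t).eq_empty_or_nonempty with h | h
  · rw [h]; simp
  obtain ⟨t₀, h₀⟩ := h
  have hz₀ := (mem_filter.mp h₀).2
  let f : ℕ → (ZMod (p ^ 2))ˣ := fun t =>
    if h : ((p : ℤ) ^ 2) ∣ F n t then (hm t h).unit * (hm t₀ hz₀).unit⁻¹ else 1
  refine le_trans (card_le_card_of_injOn f (t := univ.filter fun g => g ^ 3 = 1) ?_ ?_)
    (IsCyclic.card_pow_eq_one_le three_pos)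
  · intro t ht
    have hz := (mem_filter.mp ht).2
    have hF : ∀ t : ℕ, ((p : ℤ) ^ 2) ∣ F n t →
        ((4 : ℤ) : ZMod (p ^ 2)) * ((1 + 6 * n ^ 2 * t : ℤ) : ZMod (p ^ 2)) ^ 3 =
          ((27 * n ^ 2 : ℤ) : ZMod (p ^ 2)) := by
      intro t h
      have : ((F n t : ℤ) : ZMod (p ^ 2)) = 0 := by
        rw [ZMod.intCast_zmod_eq_zero_iff_dvd]
        push_cast
        exact h
      unfold F at this
      push_cast at this ⊢
      exact sub_eq_zero.mp this
    have hc : (hm t hz).unit ^ 3 = (hm t₀ hz₀).unit ^ 3 := by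
      apply Units.ext
      simp only [Units.val_pow_eq_pow_val, IsUnit.unit_spec]
      exact h4.mul_left_cancel ((hF t hz).trans (hF t₀ hz₀).symm)
    simp only [coe_filter, mem_univ, true_and, Set.mem_ofPred_eq, f, dif_pos hz]
    rw [mul_pow, hc, inv_pow, mul_inv_cancel]
  · intro t ht t' ht' hff
    have hz := (mem_filter.mp ht).2
    have hz' := (mem_filter.mp ht').2
    simp only [f, dif_pos hz, dif_pos hz', mul_left_inj] at hff
    have hval := congrArg Units.val hff
    simp only [IsUnit.unit_spec] at hval
    rw [ZMod.intCast_eq_intCast_iff_dvd_sub] at hval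
    have hc6 : IsCoprime (((p ^ 2 : ℕ)) : ℤ) (6 * n) := by
      push_cast
      exact ((hpZ.coprime_iff_not_dvd).mpr hpn).pow_left
    have e1 : (((p ^ 2 : ℕ)) : ℤ) ∣ (6 * n) * (n * (t' - t)) := by
      have e : (6 * n) * (n * ((t' : ℤ) - t)) = 1 + 6 * n ^ 2 * t' - (1 + 6 * n ^ 2 * t) := by ring
      rw [e]; exact hval
    have e2 := hc6.dvd_of_dvd_mul_left e1
    have e3 : (((p ^ 2 : ℕ)) : ℤ) ∣ (6 * n) * (t' - t) := by
      have e : (6 * n) * ((t' : ℤ) - t) = 6 * (n * (t' - t)) := by ring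
      rw [e]; exact e2.mul_left 6
    have e4 := hc6.dvd_of_dvd_mul_left e3
    exact (Nat.modEq_iff_dvd.mpr e4).eq_of_lt_of_lt (mem_range.mp (mem_filter.mp ht).1)
      (mem_range.mp (mem_filter.mp ht').1)

open Finset in
theorem card_sq_dvd_le (n : ℤ) (N p : ℕ) (hp : p.Prime) (hpn : ¬ (p : ℤ) ∣ 6 * n) :
    ((Ico N (2 * N)).filter fun t => ((p : ℤ) ^ 2) ∣ F n t).card ≤ 3 * (N / p ^ 2 + 1) := by
  have hpos : 0 < p ^ 2 := pow_pos hp.pos 2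
  have hper : ∀ s, ((p : ℤ) ^ 2) ∣ F n (s + p ^ 2) ↔ ((p : ℤ) ^ 2) ∣ F n s := by
    intro s
    have h1 : ((p : ℤ) ^ 2) ∣ F n (s + p ^ 2) - F n s := by
      unfold F
      push_cast
      have := sub_dvd_pow_sub_pow (1 + 6 * n ^ 2 * ((s : ℤ) + p ^ 2)) (1 + 6 * n ^ 2 * s) 3
      have h2 : (p : ℤ) ^ 2 ∣ 1 + 6 * n ^ 2 * ((s : ℤ) + p ^ 2) - (1 + 6 * n ^ 2 * s) :=
        ⟨6 * n ^ 2, by ring⟩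
      obtain ⟨c, hc⟩ := h2.trans this
      exact ⟨4 * c, by linear_combination 4 * hc⟩
    exact (dvd_iff_dvd_of_dvd_sub h1)
  have h := card_filter_Ico_mul_le (fun t => ((p : ℤ) ^ 2) ∣ F n t) (p ^ 2) hper (N / p ^ 2 + 1) N
  refine le_trans (card_le_card (filter_subset_filter _ ?_)) (h.trans ?_)
  · apply Ico_subset_Ico le_rfl
    have := Nat.div_add_mod N (p ^ 2)
    have := Nat.mod_lt N hpos
    have e : (N / p ^ 2 + 1) * p ^ 2 = p ^ 2 * (N / p ^ 2) + p ^ 2 := by ring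
    omega
  · rw [mul_comm]
    exact Nat.mul_le_mul_right _ (count_sq_dvd_le n p hp hpn)

/-! ### The number of sieving primes -/

/-- The sieving primes at level `j`: the primes `200 ≤ l ≤ j / 2` not dividing `n`. Their product
is at most `2 ^ j`. -/
def sievePrimes (n : ℤ) (j : ℕ) : Finset ℕ :=
  (Finset.range (j / 2 + 1)).filter fun l => l.Prime ∧ 200 ≤ l ∧ ¬ (l : ℤ) ∣ n

theorem prod_sievePrimes_le (n : ℤ) (j : ℕ) : ∏ l ∈ sievePrimes n j, l ≤ 2 ^ j := by
  calc ∏ l ∈ sievePrimes n j, l ≤ primorial (j / 2) := by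
        unfold primorial sievePrimes
        apply Finset.prod_le_prod_of_subset_of_one_le'
        · intro l hl
          simp only [Finset.mem_filter] at hl ⊢
          exact ⟨hl.1, hl.2.1⟩
        · intro l hl _
          exact (Finset.mem_filter.mp hl).2.one_le
    _ ≤ 4 ^ (j / 2) := primorial_le_four_pow _
    _ = 2 ^ (2 * (j / 2)) := by rw [pow_mul]; norm_num
    _ ≤ 2 ^ j := Nat.pow_le_pow_right two_pos (Nat.mul_div_le j 2)

theorem primeCounting_le_card_sievePrimes (n : ℤ) (hn : n ≠ 0) (j : ℕ) :
    (j / 2).primeCounting ≤ (sievePrimes n j).card + (201 + n.natAbs) := by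
  have h : (Finset.range (j / 2 + 1)).filter Nat.Prime ⊆
      sievePrimes n j ∪ Finset.range (201 + n.natAbs) := by
    intro l hl
    simp only [sievePrimes, Finset.mem_union, Finset.mem_filter, Finset.mem_range] at hl ⊢
    by_cases h : 201 + n.natAbs ≤ l
    · left
      refine ⟨hl.1, hl.2, by omega, fun hd => ?_⟩
      have := Nat.le_of_dvd (Int.natAbs_pos.mpr hn) (Int.natCast_dvd.mp hd)
      omega
    · right; omega
  calc (j / 2).primeCounting = ((Finset.range (j / 2 + 1)).filter Nat.Prime).card := by
        rw [Nat.primeCounting, Nat.primeCounting', Nat.count_eq_card_filter_range]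
    _ ≤ _ := Finset.card_le_card h
    _ ≤ _ := Finset.card_union_le _ _
    _ = _ := by rw [Finset.card_range]

open Filter in
/-- The constant `8` is what `(3/4) ^ k ≤ j⁻²` requires of the number `k` of sieving primes. -/
theorem eventually_le_card_sievePrimes (n : ℤ) (hn : n ≠ 0) :
    ∀ᶠ j : ℕ in atTop, 8 * Real.log j ≤ (sievePrimes n j).card := by
  have hhalf : Tendsto (fun j : ℕ => j / 2) atTop atTop :=
    Nat.tendsto_div_const_atTop two_ne_zero
  have hy : Tendsto (fun j : ℕ => ((j / 2 : ℕ) : ℝ)) atTop atTop :=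
    tendsto_natCast_atTop_atTop.comp hhalf
  have hsq := hy.eventually
    ((Real.isLittleO_pow_log_id_atTop (n := 2)).bound (show (0 : ℝ) < 1 / 200 by norm_num))
  have hlog := (Real.tendsto_log_atTop.comp hy).eventually_ge_atTop ((202 + n.natAbs : ℕ) : ℝ)
  filter_upwards [hsq, hlog, hy.eventually_ge_atTop 200] with j h1 h2 h3
  set y : ℕ := j / 2 with hydef
  simp only [Function.comp, id] at h1 h2
  have hK : (202 : ℝ) + n.natAbs ≤ Real.log y := by exact_mod_cast h2
  have hnn : (0 : ℝ) ≤ n.natAbs := Nat.cast_nonneg _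
  rw [Real.norm_of_nonneg (by positivity), Real.norm_of_nonneg (by positivity)] at h1
  have hpos : 0 < Real.log y := by linarith
  have hlogy : Real.log (y + 1) ≤ Real.log y + 1 := by
    have h4 : (y : ℝ) + 1 ≤ y * 2 := by linarith
    have h5 := Real.log_le_log (by positivity) h4
    rw [Real.log_mul (by positivity) two_ne_zero] at h5
    linarith [Real.log_two_lt_d9]
  have hpi := Chebyshev.pi_ge y
  rw [div_le_iff₀ hpos] at hpi
  have hcard : ((y.primeCounting : ℕ) : ℝ) ≤ (sievePrimes n j).card + (201 + n.natAbs) := by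
    exact_mod_cast primeCounting_le_card_sievePrimes n hn j
  have hj : Real.log j ≤ 3 * Real.log y := by
    have h6 : (j : ℝ) ≤ y ^ 3 := by
      have h7 : j ≤ 3 * y := by
        have : (200 : ℕ) ≤ y := by exact_mod_cast h3
        omega
      have h8 : (j : ℝ) ≤ 3 * y := by exact_mod_cast h7
      nlinarith [mul_nonneg (Nat.cast_nonneg (α := ℝ) y) (show (0 : ℝ) ≤ y ^ 2 - 3 by nlinarith)]
    have hj0 : (0 : ℝ) < j := by
      have : 0 < j := by
        rcases Nat.eq_zero_or_pos j with h | h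
        · subst h
          norm_num [hydef] at h3
        · exact h
      exact_mod_cast this
    have h9 := Real.log_le_log hj0 h6
    rwa [Real.log_pow] at h9
  have hl2 := Real.log_two_gt_d9
  have hmain : 25 * Real.log y ≤ (y.primeCounting : ℝ) := by
    by_contra hcon
    push Not at hcon
    have h10 : (y.primeCounting : ℝ) * Real.log y ≤ 25 * Real.log y ^ 2 := by
      nlinarith
    nlinarith
  linarith

open Filter in
theorem summable_sievePrimes (n : ℤ) (hn : n ≠ 0) :
    Summable fun j : ℕ => (3 / 4 : ℝ) ^ (sievePrimes n j).card := by
  refine Summable.of_norm_bounded_eventually_nat (Real.summable_nat_pow_inv.mpr one_lt_two) ?_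
  filter_upwards [eventually_le_card_sievePrimes n hn, eventually_gt_atTop 0] with j hj hj0
  have hj' : (0 : ℝ) < j := by exact_mod_cast hj0
  rw [Real.norm_of_nonneg (by positivity)]
  calc (3 / 4 : ℝ) ^ (sievePrimes n j).card
      ≤ Real.exp (-(1 / 4)) ^ (sievePrimes n j).card := by
        gcongr
        have := Real.one_sub_le_exp_neg (1 / 4)
        linarith
    _ = Real.exp (-((sievePrimes n j).card / 4)) := by
        rw [← Real.exp_nat_mul]; congr 1; ring
    _ ≤ Real.exp (-(2 * Real.log j)) := by
        apply Real.exp_le_exp.mpr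
        linarith
    _ = ((j : ℝ) ^ 2)⁻¹ := by
        rw [Real.exp_neg]
        congr 1
        rw [two_mul, Real.exp_add, Real.exp_log hj']
        ring

/-! ### Squares of large primes -/

theorem F_bounds (n : ℤ) (hn : n ≠ 0) (N t : ℕ) (ht : t ∈ Finset.Ico N (2 * N)) :
    0 < F n t ∧ F n t ≤ 32 * (6 * n ^ 2) ^ 3 * N ^ 3 := by
  obtain ⟨h1, h2⟩ := Finset.mem_Ico.mp ht
  have hn2 : 1 ≤ n ^ 2 := by have : 0 < n ^ 2 := by positivity
                             omega
  have ht1 : (1 : ℤ) + t ≤ 2 * N := by omega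
  have ht0 : (0 : ℤ) < t ∨ t = 0 := by omega
  have hN : (0 : ℤ) < N := by omega
  have hNt : (N : ℤ) ≤ t := by exact_mod_cast h1
  have hT : (1 : ℤ) ≤ t := by omega
  unfold F
  set w := n ^ 2 with hw
  constructor
  · have h3 : 1 + 6 * w ≤ 1 + 6 * w * t := by nlinarith
    have h4 : (1 + 6 * w) ^ 3 ≤ (1 + 6 * w * t) ^ 3 := pow_le_pow_left₀ (by positivity) h3 3
    nlinarith [pow_pos (show 0 < w by omega) 3, pow_pos (show 0 < w by omega) 2]
  · have h3 : 1 + 6 * w * t ≤ 2 * (6 * w) * N := by nlinarith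
    have h4 : (1 + 6 * w * t) ^ 3 ≤ (2 * (6 * w) * N) ^ 3 := pow_le_pow_left₀ (by positivity) h3 3
    have h5 : (2 * (6 * w) * (N : ℤ)) ^ 3 = 8 * (6 * w) ^ 3 * N ^ 3 := by ring
    rw [h5] at h4
    nlinarith

theorem dvd_F_mod (n : ℤ) (q t : ℕ) (h : (q : ℤ) ∣ F n t) : (q : ℤ) ∣ F n (t % q : ℕ) := by
  have h1 : (q : ℤ) ∣ F n t - F n (t % q : ℕ) := by
    unfold F
    have h2 : (q : ℤ) ∣ 1 + 6 * n ^ 2 * (t : ℤ) - (1 + 6 * n ^ 2 * ((t % q : ℕ) : ℤ)) := by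
      refine ⟨6 * n ^ 2 * (t / q), ?_⟩
      have := Int.emod_add_mul_ediv (t : ℤ) q
      push_cast
      linear_combination (-6 * n ^ 2) * this
    obtain ⟨c, hc⟩ := h2.trans (sub_dvd_pow_sub_pow _ _ 3)
    exact ⟨4 * c, by linear_combination 4 * hc⟩
  exact (dvd_iff_dvd_of_dvd_sub h1).mp h

/-- If `p² ∣ F n t` with `p` much larger than `N`, then `F n t = q p²` with `q` small. -/
theorem exists_cofactor (n : ℤ) (hn : n ≠ 0) (N t j₀ p : ℕ) (ht : t ∈ Finset.Ico N (2 * N))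
    (hp : 32 * (6 * n.natAbs ^ 2) ^ 3 * 2 ^ j₀ * N < p) (hpt : (p : ℤ) ^ 2 ∣ F n t) :
    ∃ q : ℕ, 0 < q ∧ q * 2 ^ j₀ ≤ N ∧ (q : ℤ) ∣ F n t ∧ IsSquare (F n t / q) := by
  obtain ⟨hpos, hle⟩ := F_bounds n hn N t ht
  obtain ⟨q, hq⟩ := hpt
  have hp0 : 0 < (p : ℤ) := by omega
  have hq0 : 0 < q := by
    rw [hq] at hpos
    exact pos_of_mul_pos_right hpos (by positivity)
  lift q to ℕ using hq0.le
  have hN : 0 < N := by have := Finset.mem_Ico.mp ht; omega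
  refine ⟨q, by exact_mod_cast hq0, ?_, ⟨p ^ 2, by rw [hq, mul_comm]⟩, ?_⟩
  · set M := 32 * (6 * n.natAbs ^ 2) ^ 3 with hM
    have hMpos : 0 < M := by
      have : 0 < n.natAbs := Int.natAbs_pos.mpr hn
      positivity
    have h1 : p ^ 2 * q ≤ M * N ^ 3 := by
      zify
      rw [← hq]
      refine hle.trans (le_of_eq ?_)
      rw [hM]; push_cast; rw [sq_abs]
    have h2 : (M * 2 ^ j₀ * N) ^ 2 ≤ p ^ 2 := Nat.pow_le_pow_left hp.le 2
    have h3 : (M * 2 ^ j₀ * N) ^ 2 * q ≤ M * N ^ 3 := (Nat.mul_le_mul_right q h2).trans h1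
    have h4 : (M * N ^ 2) * (M * 2 ^ j₀ * (q * 2 ^ j₀)) ≤ (M * N ^ 2) * N := by
      calc _ = (M * 2 ^ j₀ * N) ^ 2 * q := by ring
        _ ≤ _ := h3
        _ = _ := by ring
    have h5 := Nat.le_of_mul_le_mul_left h4 (by positivity)
    exact (Nat.le_mul_of_pos_left _ (by positivity)).trans h5
  · rw [hq, Int.mul_ediv_cancel _ hq0.ne']
    exact ⟨p, sq _⟩

open Finset in
open scoped Classical in
/-- The `t` in `[N, 2N)` for which `F n t / q` is a square for a divisor `q` of `F n t` in the
dyadic range `2 ^ j ≤ N / q < 2 ^ (j + 1)`: there are `O(N / 2 ^ j)` pairs `(q, t % q)`, and each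
comes from at most `(3/4) ^ k * 6 * 2 ^ j` values of `t`, where `k` is the number of sieving primes
at level `j`. -/
theorem card_dyadic_le (n : ℤ) (C : ℝ) (hC : 0 < C)
    (hpairs : ∀ Q : ℕ, 0 < Q → (((Icc 1 Q ×ˢ range Q).filter
      fun p : ℕ × ℕ => p.2 < p.1 ∧ (p.1 : ℤ) ∣ F n p.2).card : ℝ) ≤ C * Q) (N j : ℕ) :
    (((Ico N (2 * N)).filter fun t => ∃ q : ℕ, 0 < q ∧ Nat.log 2 (N / q) = j ∧ q ≤ N ∧
      (q : ℤ) ∣ F n t ∧ IsSquare (F n t / q)).card : ℝ) ≤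
      6 * C * N * (3 / 4 : ℝ) ^ (sievePrimes n j).card := by
  set Q := N / 2 ^ j with hQ
  set k := (sievePrimes n j).card with hk
  set T := ((Icc 1 Q ×ˢ range Q).filter fun p : ℕ × ℕ => p.2 < p.1 ∧ (p.1 : ℤ) ∣ F n p.2) with hT
  set T' := T.filter fun p => p.1 ≤ N ∧ Nat.log 2 (N / p.1) = j with hT'
  have hTcard : (T'.card : ℝ) ≤ C * N / 2 ^ j := by
    have h1 : (T'.card : ℝ) ≤ T.card := by exact_mod_cast card_le_card (filter_subset _ _)
    have h2 : (Q : ℝ) ≤ N / 2 ^ j := by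
      have := Nat.cast_div_le (α := ℝ) (m := N) (n := 2 ^ j)
      rw [hQ]; exact_mod_cast this
    have h3 : (T.card : ℝ) ≤ C * Q := by
      rcases Nat.eq_zero_or_pos Q with h | h
      · rw [hT, h]; simp
      · exact hpairs Q h
    calc (T'.card : ℝ) ≤ C * Q := h1.trans h3
      _ ≤ C * (N / 2 ^ j) := by gcongr
      _ = _ := by ring
  have hsub : ((Ico N (2 * N)).filter fun t => ∃ q : ℕ, 0 < q ∧ Nat.log 2 (N / q) = j ∧ q ≤ N ∧
      (q : ℤ) ∣ F n t ∧ IsSquare (F n t / q)) ⊆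
      T'.biUnion fun p => (Ico N (2 * N)).filter fun t => t % p.1 = p.2 ∧ IsSquare (F n t / p.1) := by
    intro t ht
    obtain ⟨ht1, q, hq0, hqj, hqN, hqd, hqs⟩ := mem_filter.mp ht
    rw [mem_biUnion]
    refine ⟨(q, t % q), ?_, mem_filter.mpr ⟨ht1, rfl, hqs⟩⟩
    have hmod : t % q < q := Nat.mod_lt _ hq0
    have hqQ : q ≤ Q := by
      have h1 : 2 ^ j ≤ N / q := by
        rw [← hqj]; exact Nat.pow_log_le_self 2 (Nat.div_pos hqN hq0).ne'
      rw [hQ, Nat.le_div_iff_mul_le (by positivity), mul_comm]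
      exact (Nat.le_div_iff_mul_le hq0).mp h1
    simp only [hT', hT, mem_filter, mem_product, mem_Icc, mem_range]
    exact ⟨⟨⟨⟨hq0, hqQ⟩, hmod.trans_le hqQ⟩, hmod, dvd_F_mod n q t hqd⟩, hqN, hqj⟩
  have hfib : ∀ p ∈ T', (((Ico N (2 * N)).filter fun t =>
      t % p.1 = p.2 ∧ IsSquare (F n t / p.1)).card : ℝ) ≤ (3 / 4 : ℝ) ^ k * (6 * 2 ^ j) := by
    rintro ⟨q, a⟩ hp
    simp only [hT', hT, mem_filter, mem_product, mem_Icc, mem_range] at hp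
    obtain ⟨⟨⟨⟨hq0, -⟩, -⟩, -, hqd⟩, hqN, hqj⟩ := hp
    have hne : N / q ≠ 0 := (Nat.div_pos hqN hq0).ne'
    have h1 : 2 ^ j ≤ N / q := by rw [← hqj]; exact Nat.pow_log_le_self 2 hne
    have h2 : N / q < 2 ^ (j + 1) := by
      rw [← hqj]; exact Nat.lt_pow_succ_log_self one_lt_two _
    have h3 := card_fiber_le n N q a hq0 hqN hqd (sievePrimes n j)
      (fun l hl => (mem_filter.mp hl).2) ((prod_sievePrimes_le n j).trans h1)
    have h4 : (4 : ℝ) ^ k * (((Ico N (2 * N)).filter fun t : ℕ =>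
        t % q = a ∧ IsSquare (F n t / q)).card : ℝ) ≤ 3 ^ k * (3 * ((N / q : ℕ) : ℝ)) := by
      exact_mod_cast h3
    have h5 : ((N / q : ℕ) : ℝ) ≤ 2 * 2 ^ j := by
      have : N / q ≤ 2 * 2 ^ j := by rw [pow_succ] at h2; omega
      exact_mod_cast this
    have h6 : (0 : ℝ) < 4 ^ k := by positivity
    rw [div_pow, div_mul_eq_mul_div, le_div_iff₀ h6, mul_comm]
    refine h4.trans (mul_le_mul_of_nonneg_left ?_ (by positivity))
    linarith
  calc _ ≤ ((T'.biUnion fun p => (Ico N (2 * N)).filter fun t =>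
        t % p.1 = p.2 ∧ IsSquare (F n t / p.1)).card : ℝ) := by
        exact_mod_cast card_le_card hsub
    _ ≤ ∑ p ∈ T', (((Ico N (2 * N)).filter fun t =>
        t % p.1 = p.2 ∧ IsSquare (F n t / p.1)).card : ℝ) := by exact_mod_cast card_biUnion_le
    _ ≤ ∑ _p ∈ T', (3 / 4 : ℝ) ^ k * (6 * 2 ^ j) := sum_le_sum hfib
    _ = T'.card * ((3 / 4 : ℝ) ^ k * (6 * 2 ^ j)) := by rw [sum_const, nsmul_eq_mul]
    _ ≤ C * N / 2 ^ j * ((3 / 4 : ℝ) ^ k * (6 * 2 ^ j)) := by gcongr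
    _ = _ := by field_simp

open Finset Filter in
open scoped Classical in
/-- For a suitable `A`, few of the values `F n t` with `t` in `[N, 2N)` are divisible by the square of
an integer above `A N`. -/
theorem exists_card_large_le (n : ℤ) (hn : Odd n) : ∃ A : ℕ, 0 < A ∧ ∀ N : ℕ,
    (((Ico N (2 * N)).filter fun t => ∃ p : ℕ, A * N < p ∧ (p : ℤ) ^ 2 ∣ F n t).card : ℝ)
      ≤ N / 16 := by
  have hn0 : n ≠ 0 := by rintro rfl; simp at hn
  obtain ⟨C, hC, hpairs⟩ := exists_card_pairs_le n hn
  set f : ℕ → ℝ := fun j => (3 / 4 : ℝ) ^ (sievePrimes n j).card with hf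
  have hsum : Summable f := summable_sievePrimes n hn0
  obtain ⟨j₀, hj₀⟩ := ((tendsto_sum_nat_add f).eventually_le_const
    (show 0 < 1 / (96 * C) by positivity)).exists
  -- With this constant the cofactor `q` satisfies `q * 2 ^ j₀ ≤ N`, so that only the dyadic levels
  -- `j ≥ j₀` occur.
  refine ⟨32 * (6 * n.natAbs ^ 2) ^ 3 * 2 ^ j₀, ?_, fun N => ?_⟩
  · have : 0 < n.natAbs := Int.natAbs_pos.mpr hn0
    positivity
  have hsub : ((Ico N (2 * N)).filter fun t => ∃ p : ℕ,
      32 * (6 * n.natAbs ^ 2) ^ 3 * 2 ^ j₀ * N < p ∧ (p : ℤ) ^ 2 ∣ F n t) ⊆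
      (Ico j₀ (N + 1)).biUnion fun j => (Ico N (2 * N)).filter fun t => ∃ q : ℕ, 0 < q ∧
        Nat.log 2 (N / q) = j ∧ q ≤ N ∧ (q : ℤ) ∣ F n t ∧ IsSquare (F n t / q) := by
    intro t ht
    obtain ⟨ht1, p, hp, hpt⟩ := mem_filter.mp ht
    obtain ⟨q, hq0, hqN, hqd, hqs⟩ := exists_cofactor n hn0 N t j₀ p ht1 hp hpt
    have hqN' : q ≤ N := (Nat.le_mul_of_pos_right q (by positivity)).trans hqN
    rw [mem_biUnion]
    refine ⟨Nat.log 2 (N / q), ?_, mem_filter.mpr ⟨ht1, q, hq0, rfl, hqN', hqd, hqs⟩⟩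
    rw [mem_Ico]
    constructor
    · apply Nat.le_log_of_pow_le one_lt_two
      rw [Nat.le_div_iff_mul_le hq0, mul_comm]
      exact hqN
    · have h1 := Nat.log_le_self 2 (N / q)
      have h2 := Nat.div_le_self N q
      omega
  have htail : ∑ j ∈ Ico j₀ (N + 1), f j ≤ 1 / (96 * C) := by
    rw [sum_Ico_eq_sum_range]
    refine le_trans ?_ hj₀
    have hs := (summable_nat_add_iff j₀).mpr hsum
    refine le_trans (le_of_eq ?_) (hs.sum_le_tsum (range (N + 1 - j₀)) fun i _ => by positivity)
    exact sum_congr rfl fun i _ => by rw [add_comm]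
  calc _ ≤ (((Ico j₀ (N + 1)).biUnion fun j => (Ico N (2 * N)).filter fun t => ∃ q : ℕ, 0 < q ∧
        Nat.log 2 (N / q) = j ∧ q ≤ N ∧ (q : ℤ) ∣ F n t ∧ IsSquare (F n t / q)).card : ℝ) := by
        exact_mod_cast card_le_card hsub
    _ ≤ ∑ j ∈ Ico j₀ (N + 1), (((Ico N (2 * N)).filter fun t => ∃ q : ℕ, 0 < q ∧
        Nat.log 2 (N / q) = j ∧ q ≤ N ∧ (q : ℤ) ∣ F n t ∧ IsSquare (F n t / q)).card : ℝ) := by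
        exact_mod_cast card_biUnion_le
    _ ≤ ∑ j ∈ Ico j₀ (N + 1), 6 * C * N * f j :=
        sum_le_sum fun j _ => card_dyadic_le n C hC hpairs N j
    _ = 6 * C * N * ∑ j ∈ Ico j₀ (N + 1), f j := by rw [mul_sum]
    _ ≤ 6 * C * N * (1 / (96 * C)) := by gcongr
    _ = N / 16 := by field_simp; ring

/-! ### Squares of small primes -/

open Filter in
theorem eventually_primeCounting_mul_le (A : ℕ) (hA : 0 < A) :
    ∀ᶠ N : ℕ in atTop, (48 : ℝ) * (A * N).primeCounting ≤ N := by
  have hA' : (0 : ℝ) < A := by exact_mod_cast hA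
  have hx : Tendsto (fun N : ℕ => (A * N : ℝ)) atTop atTop :=
    tendsto_natCast_atTop_atTop.const_mul_atTop hA'
  have h1 := hx.eventually (Chebyshev.eventually_primeCounting_le one_pos)
  have h2 := (Real.tendsto_log_atTop.comp hx).eventually_ge_atTop (48 * (Real.log 4 + 1) * A)
  filter_upwards [h1, h2] with N h1 h2
  have hfl : ⌊(A * N : ℝ)⌋₊ = A * N := by
    exact_mod_cast Nat.floor_natCast (R := ℝ) (A * N)
  have hl4 : 0 < Real.log 4 := Real.log_pos (by norm_num)
  have hpos : 0 < Real.log (A * N : ℝ) := lt_of_lt_of_le (by positivity) h2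
  rw [hfl, le_div_iff₀ hpos] at h1
  simp only [Function.comp] at h2
  have hc : (0 : ℝ) < (Real.log 4 + 1) * A := by positivity
  have h3 : ((A * N).primeCounting : ℝ) * (48 * (Real.log 4 + 1) * A) ≤
      (Real.log 4 + 1) * (A * N) :=
    (mul_le_mul_of_nonneg_left h2 (Nat.cast_nonneg _)).trans h1
  refine le_of_mul_le_mul_left ?_ hc
  linarith

open Finset in
open scoped Classical in
/-- The constant `3 / 4` is `3 ∑ 1 / k²` over `k ≥ 5`, bounded by telescoping. -/
theorem card_small_le (n : ℤ) (M N : ℕ) :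
    (((Ico N (2 * N)).filter fun t => ∃ p : ℕ, p.Prime ∧ ¬ (p : ℤ) ∣ 6 * n ∧ p ≤ M ∧
      (p : ℤ) ^ 2 ∣ F n t).card : ℝ) ≤ 3 / 4 * N + 3 * M.primeCounting := by
  set S := (range (M + 1)).filter fun p : ℕ => p.Prime ∧ ¬ (p : ℤ) ∣ 6 * n with hS
  have hsub : ((Ico N (2 * N)).filter fun t => ∃ p : ℕ, p.Prime ∧ ¬ (p : ℤ) ∣ 6 * n ∧ p ≤ M ∧
      (p : ℤ) ^ 2 ∣ F n t) ⊆
      S.biUnion fun p => (Ico N (2 * N)).filter fun t => (p : ℤ) ^ 2 ∣ F n t := by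
    intro t ht
    obtain ⟨ht1, p, hp, hpn, hpM, hpt⟩ := mem_filter.mp ht
    rw [mem_biUnion]
    exact ⟨p, mem_filter.mpr ⟨mem_range.mpr (by omega), hp, hpn⟩, mem_filter.mpr ⟨ht1, hpt⟩⟩
  have hfib : ∀ p ∈ S, (((Ico N (2 * N)).filter fun t => (p : ℤ) ^ 2 ∣ F n t).card : ℝ) ≤
      3 * N * ((p : ℝ) ^ 2)⁻¹ + 3 := by
    intro p hp
    obtain ⟨-, hp1, hp2⟩ := mem_filter.mp hp
    have h1 : (((Ico N (2 * N)).filter fun t => (p : ℤ) ^ 2 ∣ F n t).card : ℝ) ≤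
        3 * (((N / p ^ 2 : ℕ) : ℝ) + 1) := by exact_mod_cast card_sq_dvd_le n N p hp1 hp2
    have h2 : ((N / p ^ 2 : ℕ) : ℝ) ≤ N / (p : ℝ) ^ 2 := by
      exact_mod_cast Nat.cast_div_le (α := ℝ) (m := N) (n := p ^ 2)
    rw [div_eq_mul_inv] at h2
    linarith
  have hS4 : S ⊆ Ioc 4 (max 4 M) := by
    intro p hp
    obtain ⟨hp0, hp1, hp2⟩ := mem_filter.mp hp
    rw [mem_range] at hp0
    have h0 := hp1.two_le
    have h2 : p ≠ 2 := by rintro rfl; exact hp2 ⟨3 * n, by push_cast; ring⟩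
    have h3 : p ≠ 3 := by rintro rfl; exact hp2 ⟨2 * n, by push_cast; ring⟩
    have h4 : p ≠ 4 := by rintro rfl; exact absurd hp1 (by decide)
    rw [mem_Ioc]
    omega
  have hsum : ∑ p ∈ S, ((p : ℝ) ^ 2)⁻¹ ≤ 1 / 4 := by
    calc ∑ p ∈ S, ((p : ℝ) ^ 2)⁻¹ ≤ ∑ p ∈ Ioc 4 (max 4 M), ((p : ℝ) ^ 2)⁻¹ :=
          sum_le_sum_of_subset_of_nonneg hS4 fun i _ _ => by positivity
      _ ≤ ((4 : ℕ) : ℝ)⁻¹ - ((max 4 M : ℕ) : ℝ)⁻¹ :=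
          sum_Ioc_inv_sq_le_sub (by norm_num) (le_max_left _ _)
      _ ≤ 1 / 4 := by
          have : (0 : ℝ) ≤ ((max 4 M : ℕ) : ℝ)⁻¹ := by positivity
          norm_num at this ⊢
  have hcard : (S.card : ℝ) ≤ M.primeCounting := by
    rw [Nat.primeCounting, Nat.primeCounting', Nat.count_eq_card_filter_range]
    exact_mod_cast card_le_card fun p hp => by
      obtain ⟨hp0, hp1, -⟩ := mem_filter.mp hp
      exact mem_filter.mpr ⟨hp0, hp1⟩
  calc _ ≤ ((S.biUnion fun p => (Ico N (2 * N)).filter fun t => (p : ℤ) ^ 2 ∣ F n t).card : ℝ) := by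
        exact_mod_cast card_le_card hsub
    _ ≤ ∑ p ∈ S, (((Ico N (2 * N)).filter fun t => (p : ℤ) ^ 2 ∣ F n t).card : ℝ) := by
        exact_mod_cast card_biUnion_le
    _ ≤ ∑ p ∈ S, (3 * N * ((p : ℝ) ^ 2)⁻¹ + 3) := sum_le_sum hfib
    _ = 3 * N * ∑ p ∈ S, ((p : ℝ) ^ 2)⁻¹ + 3 * S.card := by
        rw [sum_add_distrib, mul_sum, sum_const, nsmul_eq_mul, mul_comm (S.card : ℝ)]
    _ ≤ 3 * N * (1 / 4) + 3 * M.primeCounting := by gcongr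
    _ = _ := by ring

/-! ### Existence of squarefree values -/

theorem exists_prime_of_not_squarefree (n : ℤ) (hn : Odd n) (t : ℕ)
    (h : ¬ Squarefree (F n t)) :
    ∃ p : ℕ, p.Prime ∧ ¬ (p : ℤ) ∣ 6 * n ∧ (p : ℤ) ^ 2 ∣ F n t := by
  rw [← Int.squarefree_natAbs, Nat.squarefree_iff_prime_squarefree] at h
  push Not at h
  obtain ⟨p, hp, hpd⟩ := h
  have hd : (p : ℤ) ^ 2 ∣ F n t := by
    rw [← Int.natCast_dvd] at hpd
    rw [sq]; exact_mod_cast hpd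
  refine ⟨p, hp, fun hp6 => ?_, hd⟩
  have hu := (isCoprime_F n hn t).isUnit_of_dvd' ((dvd_pow_self _ two_ne_zero).trans hd) hp6
  exact (Nat.prime_iff_prime_int.mp hp).not_isUnit hu

open Finset Filter in
/-- For every fixed odd integer `n`, there are infinitely many integers `m` such that
`4 * m ^ 3 - 27 * n ^ 2` is squarefree. -/
theorem stmt_1 (n : ℤ) (hn : Odd n) :
    {m : ℤ | Squarefree (4 * m ^ 3 - 27 * n ^ 2)}.Infinite := by
  classical
  have hn0 : n ≠ 0 := by rintro rfl; simp at hn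
  obtain ⟨A, hA, hlarge⟩ := exists_card_large_le n hn
  apply Set.infinite_of_forall_exists_gt
  intro m₀
  obtain ⟨N, hN, hN0⟩ := ((eventually_primeCounting_mul_le A hA).and
    (eventually_gt_atTop m₀.natAbs)).exists
  have hNpos : (0 : ℝ) < N := by
    have : 0 < N := by omega
    exact_mod_cast this
  obtain ⟨t, ht, hsq⟩ : ∃ t ∈ Ico N (2 * N), Squarefree (F n t) := by
    by_contra! hcon
    have hcover : Ico N (2 * N) ⊆
        ((Ico N (2 * N)).filter fun t => ∃ p : ℕ, p.Prime ∧ ¬ (p : ℤ) ∣ 6 * n ∧ p ≤ A * N ∧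
          (p : ℤ) ^ 2 ∣ F n t) ∪
        ((Ico N (2 * N)).filter fun t => ∃ p : ℕ, A * N < p ∧ (p : ℤ) ^ 2 ∣ F n t) := by
      intro t ht
      obtain ⟨p, hp, hp6, hpd⟩ := exists_prime_of_not_squarefree n hn t (hcon t ht)
      rw [mem_union, mem_filter, mem_filter]
      rcases le_or_gt p (A * N) with h | h
      · exact Or.inl ⟨ht, p, hp, hp6, h, hpd⟩
      · exact Or.inr ⟨ht, p, h, hpd⟩
    have hle := (card_le_card hcover).trans (card_union_le _ _)
    rw [Nat.card_Ico, show 2 * N - N = N by omega] at hle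
    have hle' := Nat.cast_le (α := ℝ).mpr hle
    rw [Nat.cast_add] at hle'
    have h1 := card_small_le n (A * N) N
    have h2 := hlarge N
    -- The two parts have at most `3N/4 + N/16` and `N/16` elements.
    linarith
  have h1 := (mem_Ico.mp ht).1
  refine ⟨1 + 6 * n ^ 2 * t, hsq, ?_⟩
  have hn2 : 0 < n ^ 2 := by positivity
  have h2 : m₀ < t := by omega
  nlinarith
end

section
/- Let m, n ∈ ℤ with D = 4m³ − 27n² squarefree, let K_{D'} = ℚ(√(−3D)), and let μ = (27n + 3√(−3D))/2 ∈ K_{D'}. Then: (i) μ is an algebraic integer of K_{D'} with norm N_{K_{D'}/ℚ}(μ) = 27m³ = (3m)³; (ii) there exists an ideal 𝔞 of the ring of integers O_{K_{D'}} such that μ·O_{K_{D'}} = 𝔞³; (iii) if in addition X³ − mX + n is irreducible over ℚ, then μ is not the cube of any element of K_{D'}, and hence 108n + 12√(−3D) = 8μ is not a cube in K_{D'}; (iv) the point (12m, 108n) is an affine rational point on the elliptic curve E_{D'}: y² = x³ − 27·16·D, i.e. (108n)² = (12m)³ − 432D. -/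
open Polynomial NumberField

/-!
Put `ν = (9n + s)/2`, so that `μ = 3ν` and `ν² - 9nν + 3m³ = 0`. Squarefreeness of
`D = 4m³ - 27n²` forces `3 ∤ D`, `3 ∤ m` and `gcd(m, n) = 1`. In particular `-3D` is not a rational
square, so `1, s` is a `ℚ`-basis of `K`, and the norm of `μ` is a `2 × 2` determinant.

For the ideal statement, let `𝔭 = (3, ν)` and `𝔟 = (m, ν)`. The equation of `ν` together with the
coprimality of `m` to `3` and to `n` gives `𝔭² = (3)` and `𝔭𝔟³ = (ν)`, whence
`(μ) = (3)(ν) = 𝔭³𝔟³ = (𝔭𝔟)³`; see `span_three_mul_eq_cube`, valid in any commutative ring.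

If `μ = β³` with `β = x + ys`, comparing norms gives `N(β)³ = (3m)³`, hence `N(β) = 3m`. The trace
`t = 2x` then satisfies `t³ = 27n + 9mt`, so `-t/3` is a rational root of `X³ - mX + n`, which
therefore is not irreducible.
-/

/-- If `ν² = 9nν - 3m³` with `m` coprime to `3` and to `n`, then `(3ν)` is the cube of the ideal
`(3, ν)(m, ν)`, since `(3, ν)² = (3)` and `(3, ν)(m, ν)³ = (ν)`. -/
lemma span_three_mul_eq_cube {R : Type*} [CommRing R] (m n ν : R)
    (h3 : IsCoprime m 3) (hn : IsCoprime m n) (hν : ν ^ 2 = 9 * n * ν - 3 * m ^ 3) :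
    Ideal.span {3 * ν} = (Ideal.span {3, ν} * Ideal.span {m, ν}) ^ 3 := by
  have hp : (Ideal.span {3, ν} : Ideal R) * Ideal.span {3, ν} = Ideal.span {3} := by
    rw [Ideal.span_pair_mul_span_pair]
    apply le_antisymm
    · rw [Ideal.span_le]
      rintro x (rfl | rfl | rfl | rfl) <;>
        simp only [SetLike.mem_coe, Ideal.mem_span_singleton]
      · exact ⟨3, by ring⟩
      · exact ⟨ν, by ring⟩
      · exact ⟨ν, by ring⟩
      · exact ⟨3 * n * ν - m ^ 3, by linear_combination hν⟩
    · rw [Ideal.span_singleton_le_iff_mem]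
      obtain ⟨a, b, hab⟩ := h3.pow_left (m := 3)
      simp only [Ideal.mem_span_insert, Ideal.mem_span_singleton']
      -- `3 = 3(a m³ + 3b)` with `3m³ = 9nν - ν²`
      exact ⟨b, _, ⟨3 * n * a, _, ⟨0, _, ⟨-a, rfl⟩, rfl⟩, rfl⟩,
        by linear_combination (-3) * hab + a * hν⟩
  have h9n : IsCoprime m (9 * n) := by
    have : IsCoprime m (3 * 3) := h3.mul_right h3
    norm_num at this
    exact this.mul_right hn
  have hb2 : (Ideal.span {m, ν} : Ideal R) * Ideal.span {m, ν} = Ideal.span {m ^ 2, ν} := by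
    rw [Ideal.span_pair_mul_span_pair]
    apply le_antisymm
    · rw [Ideal.span_le]
      rintro x (rfl | rfl | rfl | rfl) <;>
        simp only [SetLike.mem_coe, Ideal.mem_span_pair]
      · exact ⟨1, 0, by ring⟩
      · exact ⟨0, m, by ring⟩
      · exact ⟨0, m, by ring⟩
      · exact ⟨0, ν, by ring⟩
    · rw [Ideal.span_le]
      obtain ⟨a, b, hab⟩ := h9n
      rintro x (rfl | rfl) <;>
        simp only [SetLike.mem_coe, Ideal.mem_span_insert, Ideal.mem_span_singleton']
      · exact ⟨1, _, ⟨0, _, ⟨0, _, ⟨0, rfl⟩, rfl⟩, rfl⟩, by ring⟩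
      · -- `ν = a(mν) + b(9nν)` with `9nν = ν² + 3m³`
        exact ⟨3 * m * b, _, ⟨a, _, ⟨0, _, ⟨b, rfl⟩, rfl⟩, rfl⟩,
          by linear_combination (-x) * hab - b * hν⟩
  have hb3 : (Ideal.span {m, ν} : Ideal R) * Ideal.span {m ^ 2, ν} = Ideal.span {m ^ 3, ν} := by
    rw [Ideal.span_pair_mul_span_pair]
    apply le_antisymm
    · rw [Ideal.span_le]
      rintro x (rfl | rfl | rfl | rfl) <;>
        simp only [SetLike.mem_coe, Ideal.mem_span_pair]
      · exact ⟨1, 0, by ring⟩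
      · exact ⟨0, m, by ring⟩
      · exact ⟨0, m ^ 2, by ring⟩
      · exact ⟨0, ν, by ring⟩
    · rw [Ideal.span_le]
      obtain ⟨a, b, hab⟩ := h9n
      rintro x (rfl | rfl) <;>
        simp only [SetLike.mem_coe, Ideal.mem_span_insert, Ideal.mem_span_singleton']
      · exact ⟨1, _, ⟨0, _, ⟨0, _, ⟨0, rfl⟩, rfl⟩, rfl⟩, by ring⟩
      · exact ⟨3 * b, _, ⟨a, _, ⟨0, _, ⟨b, rfl⟩, rfl⟩, rfl⟩,
          by linear_combination (-x) * hab - b * hν⟩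
  have hpb : (Ideal.span {3, ν} : Ideal R) * Ideal.span {m ^ 3, ν} = Ideal.span {ν} := by
    rw [Ideal.span_pair_mul_span_pair]
    apply le_antisymm
    · rw [Ideal.span_le]
      rintro x (rfl | rfl | rfl | rfl) <;>
        simp only [SetLike.mem_coe, Ideal.mem_span_singleton]
      · exact ⟨9 * n - ν, by linear_combination hν⟩
      · exact ⟨3, by ring⟩
      · exact ⟨m ^ 3, by ring⟩
      · exact ⟨ν, by ring⟩
    · rw [Ideal.span_singleton_le_iff_mem]
      obtain ⟨a, b, hab⟩ := h3.pow_left (m := 3)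
      simp only [Ideal.mem_span_insert, Ideal.mem_span_singleton']
      exact ⟨0, _, ⟨b, _, ⟨a, _, ⟨0, rfl⟩, rfl⟩, rfl⟩,
        by linear_combination (-ν) * hab⟩
  calc (Ideal.span {3 * ν} : Ideal R)
      = Ideal.span {3} * Ideal.span {ν} := (Ideal.span_singleton_mul_span_singleton _ _).symm
    _ = (Ideal.span {3, ν} * Ideal.span {3, ν}) * (Ideal.span {3, ν} *
          (Ideal.span {m, ν} * (Ideal.span {m, ν} * Ideal.span {m, ν}))) := by
        rw [hb2, hb3, hpb, hp]
    _ = _ := by ring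

lemma not_three_dvd_of_squarefree {m n : ℤ} (hD : Squarefree (4 * m ^ 3 - 27 * n ^ 2)) :
    ¬ (3 : ℤ) ∣ m := by
  rintro ⟨k, rfl⟩
  have := hD 3 ⟨12 * k ^ 3 - 3 * n ^ 2, by ring⟩
  norm_num [Int.isUnit_iff] at this

lemma isCoprime_of_squarefree {m n : ℤ} (hD : Squarefree (4 * m ^ 3 - 27 * n ^ 2)) :
    IsCoprime m n := by
  rw [Int.isCoprime_iff_gcd_eq_one]
  obtain ⟨a, ha⟩ := Int.gcd_dvd_left m n
  obtain ⟨b, hb⟩ := Int.gcd_dvd_right m n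
  have := hD (Int.gcd m n : ℤ) ⟨4 * (Int.gcd m n : ℤ) * a ^ 3 - 27 * b ^ 2, by
    generalize (Int.gcd m n : ℤ) = g at ha hb
    subst ha hb
    ring⟩
  rw [Int.isUnit_iff] at this
  omega

/-- `-3D` is not a rational square, because `3` divides it exactly once. -/
lemma rat_sq_ne {m n : ℤ} (hD : Squarefree (4 * m ^ 3 - 27 * n ^ 2)) (q : ℚ) :
    q ^ 2 ≠ ((-3 * (4 * m ^ 3 - 27 * n ^ 2) : ℤ) : ℚ) := by
  intro h
  have hq : IsIntegral ℤ q := by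
    refine IsIntegral.of_pow (n := 2) (by norm_num) ?_
    rw [h]
    exact isIntegral_algebraMap (R := ℤ) (x := -3 * (4 * m ^ 3 - 27 * n ^ 2))
  obtain ⟨k, rfl⟩ := IsIntegrallyClosed.isIntegral_iff.mp hq
  have hk : k ^ 2 = -3 * (4 * m ^ 3 - 27 * n ^ 2) := by
    simp only [eq_intCast] at h
    exact_mod_cast h
  have h3 : Prime (3 : ℤ) := Int.prime_three
  obtain ⟨l, rfl⟩ : (3 : ℤ) ∣ k := h3.dvd_of_dvd_pow (n := 2) 
    ⟨-(4 * m ^ 3 - 27 * n ^ 2), by rw [hk]; ring⟩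
  have h4 : (3 : ℤ) ∣ 4 * m ^ 3 := ⟨9 * n ^ 2 - l ^ 2, by linarith⟩
  rcases h3.dvd_or_dvd h4 with h | h
  · norm_num at h
  · exact not_three_dvd_of_squarefree hD (h3.dvd_of_dvd_pow h)

/-- A square root `s` of a rational number `S` which is not a rational square generates a quadratic
extension with basis `1, s`. -/
lemma exists_basis_one_sqrt {K : Type*} [Field K] [CharZero K] (hK : Module.finrank ℚ K = 2)
    {S : ℚ} (hS : ∀ q : ℚ, q ^ 2 ≠ S) {s : K} (hs : s ^ 2 = (S : K)) :
    ∃ b : Module.Basis (Fin 2) ℚ K, b 0 = 1 ∧ b 1 = s := by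
  have hli : LinearIndependent ℚ ![(1 : K), s] := by
    rw [LinearIndependent.pair_iff]
    intro x y hxy
    simp only [Algebra.smul_def, mul_one, eq_ratCast] at hxy
    have hy : y = 0 := by
      by_contra hy
      have hy' : (y : K) ≠ 0 := by exact_mod_cast hy
      apply hS (-x / y)
      have : s = ((-x / y : ℚ) : K) := by
        push_cast
        field_simp
        linear_combination hxy
      rw [this] at hs
      exact_mod_cast hs
    subst hy
    simpa using hxy
  refine ⟨basisOfLinearIndependentOfCardEqFinrank hli (by simp [hK]), ?_, ?_⟩ <;> simp

lemma norm_of_basis_one_sqrt {K : Type*} [Field K] [CharZero K]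
    {S : ℚ} {s : K} (hs : s ^ 2 = (S : K)) (b : Module.Basis (Fin 2) ℚ K)
    (h0 : b 0 = 1) (h1 : b 1 = s) (x y : ℚ) :
    Algebra.norm ℚ ((x : K) + y * s) = x ^ 2 - S * y ^ 2 := by
  have h : Algebra.lmul ℚ K ((x : K) + y * s) = Matrix.toLin b b !![x, S * y; y, x] := by
    apply b.ext
    intro i
    rw [Matrix.toLin_self, Fin.sum_univ_two, h0, h1]
    fin_cases i
    · simp [h0, Algebra.smul_def]
    · simp [h1, Algebra.smul_def]
      linear_combination (y : K) * hs
  rw [Algebra.norm_apply, h, LinearMap.det_toLin, Matrix.det_fin_two_of]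
  ring

/-- A cube root of `μ = (27n + 3s)/2` in `K` has trace `t` with `-t / 3` a root of `X³ - mX + n`. -/
lemma exists_root_of_cube {K : Type*} [Field K] [CharZero K] {m n : ℚ} {s : K}
    (hs : s ^ 2 = ((-3 * (4 * m ^ 3 - 27 * n ^ 2) : ℚ) : K)) (b : Module.Basis (Fin 2) ℚ K)
    (h0 : b 0 = 1) (h1 : b 1 = s) {β : K} (hβ : β ^ 3 = ((27 * n : ℚ) + 3 * s) / 2) :
    ∃ r : ℚ, r ^ 3 - m * r + n = 0 := by
  have hrep (z : K) : z = (b.repr z 0 : K) + b.repr z 1 * s := by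
    conv_lhs => rw [← b.sum_repr z]
    simp [Fin.sum_univ_two, h0, h1, Algebra.smul_def]
  obtain ⟨x, y, rfl⟩ : ∃ x y : ℚ, β = x + y * s := ⟨_, _, hrep β⟩
  have hN : (x ^ 2 - (-3 * (4 * m ^ 3 - 27 * n ^ 2)) * y ^ 2) ^ 3 = (3 * m) ^ 3 := by
    have h := congrArg (Algebra.norm ℚ) hβ
    rw [map_pow, norm_of_basis_one_sqrt hs b h0 h1,
      show ((27 * n : ℚ) + 3 * s) / 2 = ((27 * n / 2 : ℚ) : K) + ((3 / 2 : ℚ) : K) * s by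
        push_cast; ring, norm_of_basis_one_sqrt hs b h0 h1] at h
    rw [h]
    ring
  have hN' : x ^ 2 - (-3 * (4 * m ^ 3 - 27 * n ^ 2)) * y ^ 2 = 3 * m :=
    (Odd.strictMono_pow (by decide : Odd 3)).injective hN
  have hx : x ^ 3 + 3 * x * y ^ 2 * (-3 * (4 * m ^ 3 - 27 * n ^ 2)) = 27 * n / 2 := by
    have e : (x ^ 3 + 3 * x * y ^ 2 * (-3 * (4 * m ^ 3 - 27 * n ^ 2)) - 27 * n / 2) • b 0
        + (3 * x ^ 2 * y + y ^ 3 * (-3 * (4 * m ^ 3 - 27 * n ^ 2)) - 3 / 2) • b 1 = 0 := by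
      simp only [h0, h1, Algebra.smul_def, eq_ratCast]
      push_cast at hs hβ ⊢
      linear_combination hβ - (3 * (x : K) * y ^ 2 + y ^ 3 * s) * hs
    have := Fintype.linearIndependent_iff.mp b.linearIndependent
      ![_, _] (by simpa [Fin.sum_univ_two] using e) 0
    simp only [Matrix.cons_val_zero] at this
    linarith
  refine ⟨-(2 * x) / 3, ?_⟩
  linear_combination (-2 / 27) * hx - (2 / 9) * x * hN'

/-- Let `m, n ∈ ℤ` with `D = 4m³ - 27n²` squarefree, let `K = ℚ(√(-3D))` and let
`μ = (27n + 3√(-3D))/2 ∈ K`. Then (i) `μ` is an algebraic integer of norm `27m³ = (3m)³`;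
(ii) the principal ideal `μ·O_K` is the cube of an ideal of `O_K`; (iii) if
`X³ - mX + n` is irreducible over `ℚ` then `μ` is not a cube in `K`, and neither is
`8μ = 108n + 12√(-3D)`; (iv) `(108n)² = (12m)³ - 432·D`, i.e. `(12m, 108n)` lies on the
elliptic curve `y² = x³ - 432D`. -/
theorem stmt_7 (m n : ℤ) (hD : Squarefree (4 * m ^ 3 - 27 * n ^ 2))
    (K : Type) [Field K] [NumberField K] (hK : Module.finrank ℚ K = 2)
    (s : K) (hs : s ^ 2 = ((-3 * (4 * m ^ 3 - 27 * n ^ 2) : ℤ) : K))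
    (μ : K) (hμ : μ = (((27 * n : ℤ) : K) + 3 * s) / 2) :
    (IsIntegral ℤ μ ∧ Algebra.norm ℚ μ = ((27 * m ^ 3 : ℤ) : ℚ)) ∧
    (∃ (u : 𝓞 K) (a : Ideal (𝓞 K)), (u : K) = μ ∧ Ideal.span {u} = a ^ 3) ∧
    (Irreducible (X ^ 3 - C (m : ℚ) * X + C (n : ℚ)) →
      (¬ ∃ β : K, β ^ 3 = μ) ∧
      ¬ ∃ β : K, β ^ 3 = ((108 * n : ℤ) : K) + 12 * s) ∧
    ((108 * n) ^ 2 = (12 * m) ^ 3 - 432 * (4 * m ^ 3 - 27 * n ^ 2)) := by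
  set S : ℤ := -3 * (4 * m ^ 3 - 27 * n ^ 2) with hS
  have hsQ : s ^ 2 = ((S : ℚ) : K) := by rw [hs]; norm_cast
  obtain ⟨b, h0, h1⟩ := exists_basis_one_sqrt hK (S := (S : ℚ)) (rat_sq_ne hD) hsQ
  obtain ⟨ν, hν⟩ : ∃ ν : K, ν = (9 * n + s) / 2 := ⟨_, rfl⟩
  have hμν : μ = 3 * ν := by rw [hμ, hν]; push_cast; ring
  have hquad : ν ^ 2 = 9 * n * ν - 3 * m ^ 3 := by
    rw [hS] at hs
    push_cast at hs
    rw [hν]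
    linear_combination hs / 4
  have hint : IsIntegral ℤ ν := by
    refine ⟨X ^ 2 - C (9 * n) * X + C (3 * m ^ 3), by monicity!, ?_⟩
    simp only [eval₂_add, eval₂_sub, eval₂_mul, eval₂_pow, eval₂_X, eval₂_C]
    simp only [algebraMap_int_eq, eq_intCast, Int.cast_mul, Int.cast_pow, Int.cast_ofNat]
    linear_combination hquad
  obtain ⟨w, hw⟩ : ∃ w : 𝓞 K, algebraMap (𝓞 K) K w = ν := ⟨⟨ν, hint⟩, rfl⟩
  have hcube : ¬ Irreducible (X ^ 3 - C (m : ℚ) * X + C (n : ℚ)) ∨ ¬ ∃ β : K, β ^ 3 = μ := by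
    by_contra! h
    obtain ⟨hirr, β, hβ⟩ := h
    obtain ⟨r, hr⟩ := exists_root_of_cube (m := m) (n := n) (s := s) (β := β)
      (by rw [hsQ, hS]; push_cast; ring) b h0 h1 (by rw [hβ, hμ]; push_cast; ring)
    have hdeg := degree_eq_one_of_irreducible_of_root (x := r) hirr (by simp [hr])
    have : (X ^ 3 - C (m : ℚ) * X + C (n : ℚ)).degree = 3 := by compute_degree!
    rw [this] at hdeg
    exact absurd hdeg (by decide)
  refine ⟨⟨?_, ?_⟩, ?_, ?_, by ring⟩
  · rw [hμν]
    have h3 : IsIntegral ℤ (3 : K) := by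
      simpa using isIntegral_algebraMap (R := ℤ) (A := K) (x := 3)
    exact h3.mul hint
  · rw [hμ, show (((27 * n : ℤ) : K) + 3 * s) / 2
        = ((27 * n / 2 : ℚ) : K) + ((3 / 2 : ℚ) : K) * s by push_cast; ring,
      norm_of_basis_one_sqrt hsQ b h0 h1, hS]
    push_cast
    ring
  · refine ⟨3 * w, _, ?_,
      span_three_mul_eq_cube (m : 𝓞 K) (n : 𝓞 K) _ ?_ ?_ ?_⟩
    · change algebraMap (𝓞 K) K (3 * w) = μ
      rw [hμν, map_mul, hw, map_ofNat (algebraMap (𝓞 K) K) 3]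
    · have h : IsCoprime m 3 :=
        ((Int.prime_three.coprime_iff_not_dvd).mpr (not_three_dvd_of_squarefree hD)).symm
      simpa using h.map (Int.castRingHom (𝓞 K))
    · simpa using (isCoprime_of_squarefree hD).map (Int.castRingHom (𝓞 K))
    · apply RingOfIntegers.ext
      simpa [hw, map_ofNat (algebraMap (𝓞 K) K) 9, map_ofNat (algebraMap (𝓞 K) K) 3] using hquad
  · intro hirr
    have hno := hcube.resolve_left (not_not.mpr hirr)
    refine ⟨hno, ?_⟩
    rintro ⟨β, hβ⟩
    refine hno ⟨β / 2, ?_⟩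
    rw [div_pow, hβ, hμ]
    push_cast
    ring
end

section
/- Let M be a quadratic number field with nontrivial automorphism σ, and let μ₁, μ₂ be nonzero elements of the ring of integers O_M that are 3-virtual units but not cubes: i.e. for each i there is an ideal 𝔞ᵢ of O_M with μᵢ·O_M = 𝔞ᵢ³, and μᵢ is not the cube of an element of M. Then there exist cube roots α₁ of μ₁ and α₂ of μ₂ in a fixed algebraic closure of M with M(α₁) = M(α₂) if and only if μ₁/μ₂ ∈ (M^*)³ or μ₁/σ(μ₂) ∈ (M^*)³. -/
/-!
Write `α = α₂`, so that `α ^ 3 = μ₂` has degree three over `M`. If `M(α₁) = M(α)`, then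
`α₁ = a + b α + c α ^ 2` with `a, b, c ∈ M`, and the vanishing of the coordinates of
`α₁ ^ 3 = μ₁` at `α` and `α ^ 2`, together with the fact that `μ₂` is not a cube, forces `a = 0`
and one of `b`, `c` to vanish (`cube_in_pure_cubic`). Hence `M(α₁) = M(α₂)` for suitable cube
roots exactly when `μ₁ / μ₂` or `μ₁ μ₂` is a cube in `M`; no root of unity is needed in `M`.

For a 3-virtual unit `μ₂` with `(μ₂) = 𝔞 ^ 3`, the norm `μ₂ σ(μ₂)` equals `± N(𝔞) ^ 3`, which is a
cube (`mul_conj_isCube`), so `μ₁ μ₂` is a cube if and only if `μ₁ / σ(μ₂)` is one.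
-/

open NumberField

/-- If `m` is not a cube, then `1, α, α ^ 2` are linearly independent for every cube root `α`
of `m`. -/
lemma pure_cubic_indep {K L : Type*} [Field K] [Field L] [Algebra K L] {m : K} {α : L}
    (hα : α ^ 3 = algebraMap K L m) (hm : ¬ ∃ β : K, β ^ 3 = m) {a b c : K}
    (h : algebraMap K L a + algebraMap K L b * α + algebraMap K L c * α ^ 2 = 0) :
    a = 0 ∧ b = 0 ∧ c = 0 := by
  have hirr : Irreducible (Polynomial.X ^ 3 - Polynomial.C m : Polynomial K) :=
    X_pow_sub_C_irreducible_of_prime Nat.prime_three fun β hβ => hm ⟨β, hβ⟩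
  have hmin : (Polynomial.X ^ 3 - Polynomial.C m : Polynomial K) = minpoly K α :=
    minpoly.eq_of_irreducible_of_monic hirr (by simp [hα])
      (Polynomial.monic_X_pow_sub_C m three_ne_zero)
  set q : Polynomial K := Polynomial.C c * Polynomial.X ^ 2 + Polynomial.C b * Polynomial.X
    + Polynomial.C a with hq
  have hdvd : minpoly K α ∣ q := minpoly.dvd K α (by simp [hq]; linear_combination h)
  have hq0 : q = 0 := by
    refine Polynomial.eq_zero_of_dvd_of_degree_lt hdvd ?_
    rw [← hmin, Polynomial.degree_X_pow_sub_C (by norm_num)]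
    exact lt_of_le_of_lt Polynomial.degree_quadratic_le (by norm_num)
  refine ⟨?_, ?_, ?_⟩
  · simpa [hq] using congrArg (fun p => Polynomial.coeff p 0) hq0
  · simpa [hq, Polynomial.coeff_X, Polynomial.coeff_C] using
      congrArg (fun p => Polynomial.coeff p 1) hq0
  · simpa [hq, Polynomial.coeff_X, Polynomial.coeff_C] using
      congrArg (fun p => Polynomial.coeff p 2) hq0

lemma pure_cubic_coords {K L : Type*} [Field K] [Field L] [Algebra K L] {m : K} {α x : L}
    (hα : α ^ 3 = algebraMap K L m) (hx : x ∈ IntermediateField.adjoin K {α}) :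
    ∃ a b c : K, x = algebraMap K L a + algebraMap K L b * α + algebraMap K L c * α ^ 2 := by
  have hmon : (Polynomial.X ^ 3 - Polynomial.C m : Polynomial K).Monic :=
    Polynomial.monic_X_pow_sub_C m three_ne_zero
  have hroot : Polynomial.aeval α (Polynomial.X ^ 3 - Polynomial.C m : Polynomial K) = 0 := by
    simp [hα]
  have hint : IsIntegral K α := ⟨_, hmon, hroot⟩
  rw [← IntermediateField.mem_toSubalgebra,
    IntermediateField.adjoin_simple_toSubalgebra_of_isAlgebraic hint.isAlgebraic,
    Algebra.adjoin_singleton_eq_range_aeval] at hx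
  obtain ⟨p, rfl⟩ := hx
  set r := p %ₘ (Polynomial.X ^ 3 - Polynomial.C m) with hr
  have hdeg : r.natDegree < 3 := by
    have := Polynomial.natDegree_modByMonic_lt p hmon (fun h => by
      have := congrArg Polynomial.natDegree h
      simp at this)
    rwa [Polynomial.natDegree_X_pow_sub_C] at this
  have hev : Polynomial.aeval α p = Polynomial.aeval α r :=
    (Polynomial.aeval_modByMonic_eq_self_of_root hroot).symm
  refine ⟨r.coeff 0, r.coeff 1, r.coeff 2, ?_⟩
  change Polynomial.aeval α p = _
  rw [hev, Polynomial.aeval_eq_sum_range' hdeg]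
  simp [Finset.sum_range_succ, Algebra.smul_def]

/-- In a pure cubic extension `K(α)`, `α ^ 3 = m`, an element `x` whose cube `n` lies in `K` and is
not a cube there has the form `b α` or `c α ^ 2` with `b, c ∈ K`; the conclusion records its cube. -/
lemma cube_in_pure_cubic {K L : Type*} [Field K] [CharZero K] [Field L] [Algebra K L]
    {m n : K} {α x : L} (hα : α ^ 3 = algebraMap K L m) (hm : ¬ ∃ β : K, β ^ 3 = m)
    (hxn : x ^ 3 = algebraMap K L n) (hn : ¬ ∃ β : K, β ^ 3 = n)
    (hx : x ∈ IntermediateField.adjoin K {α}) :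
    (∃ b : K, n = b ^ 3 * m) ∨ (∃ c : K, n = c ^ 3 * m ^ 2) := by
  obtain ⟨a, b, c, rfl⟩ := pure_cubic_coords hα hx
  have hm0 : m ≠ 0 := fun h => hm ⟨0, by simp [h]⟩
  obtain ⟨h0, h1, h2⟩ := pure_cubic_indep (K := K) hα hm
    (a := a ^ 3 + b ^ 3 * m + c ^ 3 * m ^ 2 + 6 * a * b * c * m - n)
    (b := 3 * (a ^ 2 * b + b ^ 2 * c * m + a * c ^ 2 * m))
    (c := 3 * (a ^ 2 * c + a * b ^ 2 + b * c ^ 2 * m)) (by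
      simp only [map_add, map_sub, map_mul, map_pow, map_ofNat, ← hα]
      rw [← hxn]
      ring)
  have h1 := (mul_eq_zero.mp h1).resolve_left three_ne_zero
  have h2 := (mul_eq_zero.mp h2).resolve_left three_ne_zero
  -- Eliminating `a ^ 2 b c` between the two relations leaves `c ^ 3 m = b ^ 3` unless `a = 0`.
  have key : a * (c ^ 3 * m - b ^ 3) = 0 := by linear_combination c * h1 - b * h2
  rcases mul_eq_zero.mp key with ha | hcb
  · subst ha
    have : b ^ 2 * c * m = 0 := by linear_combination h1
    rcases mul_eq_zero.mp ((mul_eq_zero.mp this).resolve_right hm0) with hb | hc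
    · have hb : b = 0 := by simpa using hb
      subst hb
      exact Or.inr ⟨c, by linear_combination -h0⟩
    · subst hc
      exact Or.inl ⟨b, by linear_combination -h0⟩
  · exfalso
    by_cases hc : c = 0
    · subst hc
      have hb : b = 0 := by simpa using hcb
      subst hb
      exact hn ⟨a, by linear_combination h0⟩
    · refine hm ⟨b / c, ?_⟩
      field_simp
      linear_combination -hcb

/-- The norm `μ σ(μ)` of a 3-virtual unit of a quadratic field is a cube: it is a
rational integer whose absolute value is the cube of an ideal norm. -/
lemma mul_conj_isCube (M : Type) [Field M] [NumberField M] (hM : Module.finrank ℚ M = 2)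
    (σ : M ≃ₐ[ℚ] M) (hσ : σ ≠ AlgEquiv.refl) (μ : 𝓞 M)
    (ha : ∃ a : Ideal (𝓞 M), Ideal.span {μ} = a ^ 3) :
    ∃ t : M, t ^ 3 = (μ : M) * σ (μ : M) := by
  obtain ⟨a, ha⟩ := ha
  have : Algebra.IsQuadraticExtension ℚ M := ⟨hM⟩
  have : IsGalois ℚ M := {}
  have hN : (μ : M) * σ (μ : M) = algebraMap ℚ M (Algebra.norm ℚ (μ : M)) := by
    classical
    have hcard : Fintype.card (M ≃ₐ[ℚ] M) = 2 := by
      rw [← Nat.card_eq_fintype_card, IsGalois.card_aut_eq_finrank, hM]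
    have huniv : (Finset.univ : Finset (M ≃ₐ[ℚ] M)) = {AlgEquiv.refl, σ} := by
      symm
      apply Finset.eq_univ_of_card
      rw [hcard, Finset.card_pair hσ.symm]
    rw [Algebra.norm_eq_prod_automorphisms, huniv, Finset.prod_pair hσ.symm]
    rfl
  have habs : (Algebra.norm ℤ μ).natAbs = Ideal.absNorm a ^ 3 := by
    rw [← Ideal.absNorm_span_singleton, ha, map_pow]
  have hZ : algebraMap ℚ M (Algebra.norm ℚ (μ : M)) = ((Algebra.norm ℤ μ : ℤ) : M) := by
    rw [← Algebra.coe_norm_int]; simp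
  rw [hN, hZ]
  rcases Int.natAbs_eq (Algebra.norm ℤ μ) with h | h
  · exact ⟨(Ideal.absNorm a : M), by rw [h, habs]; push_cast; ring⟩
  · exact ⟨-(Ideal.absNorm a : M), by rw [h, habs]; push_cast; ring⟩

lemma adjoin_simple_eq_of_mem {K L : Type*} [Field K] [Field L] [Algebra K L] {x y : L}
    (h : x ∈ IntermediateField.adjoin K {y}) (h' : y ∈ IntermediateField.adjoin K {x}) :
    IntermediateField.adjoin K {x} = IntermediateField.adjoin K {y} :=
  le_antisymm (IntermediateField.adjoin_simple_le_iff.mpr h)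
    (IntermediateField.adjoin_simple_le_iff.mpr h')

/-- Let `M` be a quadratic number field with nontrivial automorphism `σ`, and let
`μ₁, μ₂` be nonzero algebraic integers of `M` that are 3-virtual units (each generates
the cube of an ideal) but not cubes in `M`. Then there are cube roots `α₁` of `μ₁` and
`α₂` of `μ₂` in a fixed algebraic closure of `M` with `M(α₁) = M(α₂)` if and only if
`μ₁/μ₂` or `μ₁/σ(μ₂)` is a cube in `M`. -/
theorem stmt_11 (M : Type) [Field M] [NumberField M] (hM : Module.finrank ℚ M = 2)
    (σ : M ≃ₐ[ℚ] M) (hσ : σ ≠ AlgEquiv.refl)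
    (μ₁ μ₂ : 𝓞 M) (hμ₁ : μ₁ ≠ 0) (hμ₂ : μ₂ ≠ 0)
    (ha₁ : ∃ a : Ideal (𝓞 M), Ideal.span {μ₁} = a ^ 3)
    (ha₂ : ∃ a : Ideal (𝓞 M), Ideal.span {μ₂} = a ^ 3)
    (hnc₁ : ¬ ∃ β : M, β ^ 3 = (μ₁ : M)) (hnc₂ : ¬ ∃ β : M, β ^ 3 = (μ₂ : M)) :
    (∃ α₁ α₂ : AlgebraicClosure M,
        α₁ ^ 3 = algebraMap M (AlgebraicClosure M) (μ₁ : M) ∧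
        α₂ ^ 3 = algebraMap M (AlgebraicClosure M) (μ₂ : M) ∧
        IntermediateField.adjoin M {α₁} = IntermediateField.adjoin M {α₂}) ↔
    ((∃ β : M, β ^ 3 = (μ₁ : M) / (μ₂ : M)) ∨
      (∃ β : M, β ^ 3 = (μ₁ : M) / σ (μ₂ : M))) := by
  have h1 : (μ₁ : M) ≠ 0 := by simpa using hμ₁
  have h2 : (μ₂ : M) ≠ 0 := by simpa using hμ₂
  have hs2 : σ (μ₂ : M) ≠ 0 := by simpa using hμ₂
  obtain ⟨t, ht⟩ := mul_conj_isCube M hM σ hσ μ₂ ha₂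
  have ht0 : t ≠ 0 := by
    rintro rfl
    exact mul_ne_zero h2 hs2 (by simpa using ht.symm)
  constructor
  · rintro ⟨α₁, α₂, hα₁, hα₂, hadj⟩
    have hmem : α₁ ∈ IntermediateField.adjoin M {α₂} :=
      hadj ▸ IntermediateField.mem_adjoin_simple_self M α₁
    rcases cube_in_pure_cubic hα₂ hnc₂ hα₁ hnc₁ hmem with ⟨b, hb⟩ | ⟨c, hc⟩
    · exact Or.inl ⟨b, by rw [hb]; field_simp⟩
    -- Since `σ(μ₂) = t ^ 3 / μ₂`, one has `c ^ 3 μ₂ ^ 2 / σ(μ₂) = (c μ₂ / t) ^ 3`.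
    · refine Or.inr ⟨c * μ₂ / t, ?_⟩
      rw [div_pow, ht, hc]
      field_simp
  · rintro (⟨β, hβ⟩ | ⟨β, hβ⟩)
    · obtain ⟨α, hα⟩ := IsAlgClosed.exists_pow_nat_eq
        (algebraMap M (AlgebraicClosure M) (μ₂ : M)) (n := 3) (by norm_num)
      have hβ0 : β ≠ 0 := by
        rintro rfl
        exact div_ne_zero h1 h2 (by simpa using hβ.symm)
      have hβ0' : algebraMap M (AlgebraicClosure M) β ≠ 0 := by simpa using hβ0
      have hμ : (μ₁ : M) = β ^ 3 * μ₂ := by rw [hβ]; field_simp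
      refine ⟨algebraMap M _ β * α, α, by rw [hμ, mul_pow, hα, map_mul, map_pow], hα,
        adjoin_simple_eq_of_mem ?_ ?_⟩
      · exact mul_mem (IntermediateField.algebraMap_mem _ β)
          (IntermediateField.mem_adjoin_simple_self M α)
      · have hmem := mul_mem (inv_mem (IntermediateField.algebraMap_mem
          (IntermediateField.adjoin M {algebraMap M (AlgebraicClosure M) β * α}) β))
          (IntermediateField.mem_adjoin_simple_self M (algebraMap M (AlgebraicClosure M) β * α))
        rwa [inv_mul_cancel_left₀ hβ0'] at hmem
    -- Here `μ₁ μ₂ = (β t) ^ 3`, so `β t / α` is a cube root of `μ₁` for any cube root `α` of `μ₂`.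
    · obtain ⟨α, hα⟩ := IsAlgClosed.exists_pow_nat_eq
        (algebraMap M (AlgebraicClosure M) (μ₂ : M)) (n := 3) (by norm_num)
      have hβ0 : β ≠ 0 := by
        rintro rfl
        exact div_ne_zero h1 hs2 (by simpa using hβ.symm)
      have hγ0 : algebraMap M (AlgebraicClosure M) (β * t) ≠ 0 := by simp [hβ0, ht0]
      have hμ : (β * t) ^ 3 = (μ₁ : M) * μ₂ := by rw [mul_pow, hβ, ht]; field_simp
      have h2' : algebraMap M (AlgebraicClosure M) (μ₂ : M) ≠ 0 := by
        rwa [Ne, map_eq_zero]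
      refine ⟨algebraMap M _ (β * t) / α, α, ?_, hα, adjoin_simple_eq_of_mem ?_ ?_⟩
      · rw [div_pow, hα, ← map_pow, hμ, map_mul, mul_div_cancel_right₀ _ h2']
      · exact div_mem (IntermediateField.algebraMap_mem _ _)
          (IntermediateField.mem_adjoin_simple_self M α)
      · have hmem := div_mem (IntermediateField.algebraMap_mem
          (IntermediateField.adjoin M {algebraMap M (AlgebraicClosure M) (β * t) / α}) (β * t))
          (IntermediateField.mem_adjoin_simple_self M
            (algebraMap M (AlgebraicClosure M) (β * t) / α))
        rwa [div_div_cancel₀ hγ0] at hmem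
end

section
/- Let m, n ∈ ℤ be such that D = 4m³ − 27n² is squarefree. Then the elliptic curves E_D: y² = x³ + 16D and E_{D'}: y² = x³ − 432D over ℚ have no rational point of order 3: the only point P ∈ E_D(ℚ) with 3P = O is P = O, and the only point P ∈ E_{D'}(ℚ) with 3P = O is P = O. -/
/-!
A point `P = (x, y)` on `y² = x³ + k` with `3P = O` satisfies `2P = -P`, so the duplication formula
gives `9x⁴ = 12xy²`. Hence either `x = 0` and `y² = k`, or `x³ = -4k` and `y² = -3k`
(`sq_eq_of_three_nsmul_eq_zero`). For `k = 16D` and `k = -432D` alike, this makes `D` or `-3D` a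
rational square, and therefore an integer square. As `D` is squarefree, this forces `D = 1` or
`D = -3`. Neither value is of the form `4m³ - 27n²`, which is congruent to `0` or `±4` modulo `9`.
-/

/-- On `y² = x³ + k`, a nontrivial rational point of order `3` makes `k` or `-3k` a square. -/
lemma sq_eq_of_three_nsmul_eq_zero (k : ℚ) (W : WeierstrassCurve.Affine ℚ)
    (hW : W = ⟨0, 0, 0, 0, k⟩) (P : W.Point) (hP : 3 • P = 0) :
    P = 0 ∨ ∃ y : ℚ, y ^ 2 = k ∨ y ^ 2 = -3 * k := by
  subst hW
  have h2 : P + P = -P := by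
    rw [eq_neg_iff_add_eq_zero, ← hP]
    abel
  rcases P with _ | ⟨x, y, hxy⟩
  · exact Or.inl rfl
  · right
    have heq := hxy.1
    rw [WeierstrassCurve.Affine.equation_iff] at heq
    simp only [zero_mul, add_zero] at heq
    by_cases hy : y = WeierstrassCurve.Affine.negY ⟨0, 0, 0, 0, k⟩ x y
    · rw [WeierstrassCurve.Affine.Point.add_self_of_Y_eq hy] at h2
      exact absurd (neg_eq_zero.mp h2.symm) (WeierstrassCurve.Affine.Point.some_ne_zero hxy)
    · rw [WeierstrassCurve.Affine.Point.add_self_of_Y_ne hy,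
        WeierstrassCurve.Affine.Point.neg_some] at h2
      have hx := (WeierstrassCurve.Affine.Point.some.inj h2).1
      rw [WeierstrassCurve.Affine.slope_of_Y_ne rfl hy] at hx
      simp only [WeierstrassCurve.Affine.addX, WeierstrassCurve.Affine.negY] at hx hy
      have hy0 : y ≠ 0 := by
        rintro rfl
        simp at hy
      have hquart : 9 * x ^ 4 = 12 * x * y ^ 2 := by
        have h2y : y - (-y - 0 * x - 0) = 2 * y := by ring
        rw [h2y] at hx
        field_simp at hx
        linear_combination hx
      refine ⟨y, ?_⟩
      rcases eq_or_ne x 0 with rfl | hx0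
      · left
        linear_combination heq
      · right
        have hcube : 3 * x ^ 3 = 4 * y ^ 2 :=
          mul_left_cancel₀ (mul_ne_zero three_ne_zero hx0) (by linear_combination hquart)
        linear_combination (-3) * heq - hcube

lemma disc_ne_one (m n : ℤ) : 4 * m ^ 3 - 27 * n ^ 2 ≠ 1 := by
  intro h
  have h9 : (4 * m ^ 3 - 27 * n ^ 2 : ZMod 9) = 1 := by exact_mod_cast congrArg (Int.cast) h
  have key : ∀ a b : ZMod 9, 4 * a ^ 3 - 27 * b ^ 2 ≠ 1 := by decide
  exact key _ _ h9

lemma disc_ne_neg_three (m n : ℤ) : 4 * m ^ 3 - 27 * n ^ 2 ≠ -3 := by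
  intro h
  have h9 : (4 * m ^ 3 - 27 * n ^ 2 : ZMod 9) = -3 := by exact_mod_cast congrArg (Int.cast) h
  have key : ∀ a b : ZMod 9, 4 * a ^ 3 - 27 * b ^ 2 ≠ -3 := by decide
  exact key _ _ h9

lemma eq_one_of_squarefree_of_sq {D : ℤ} (h : Squarefree D) {q : ℚ} (hq : q ^ 2 = D) : D = 1 := by
  obtain ⟨a, rfl⟩ : IsSquare D := Rat.isSquare_intCast_iff.mp ⟨q, by rw [← hq, sq]⟩
  have ha := h a dvd_rfl
  exact Int.isUnit_mul_self ha

lemma eq_neg_three_of_squarefree_of_sq {D : ℤ} (h : Squarefree D) {q : ℚ}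
    (hq : q ^ 2 = -3 * D) : D = -3 := by
  obtain ⟨a, ha⟩ : IsSquare (-3 * D) :=
    Rat.isSquare_intCast_iff.mp ⟨q, by push_cast; rw [← hq, sq]⟩
  have h3 : (3 : ℤ) ∣ a := by
    have h3a : (3 : ℤ) ∣ a * a := ⟨-D, by linear_combination -ha⟩
    exact (or_self_iff).mp (Int.prime_three.dvd_or_dvd h3a)
  obtain ⟨b, rfl⟩ := h3
  have hD : D = b * b * (-3) := by linarith
  have hb := Int.isUnit_mul_self (h b ⟨-3, hD⟩)
  rw [hD, hb, one_mul]


/-- If `D = 4 * m ^ 3 - 27 * n ^ 2` is squarefree, then the elliptic curves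
`E_D : y² = x³ + 16 * D` and `E_{D'} : y² = x³ - 432 * D` over `ℚ` have no nontrivial
rational point of order dividing `3`. -/
theorem stmt_13 (m n : ℤ) (h : Squarefree (4 * m ^ 3 - 27 * n ^ 2))
    (W W' : WeierstrassCurve.Affine ℚ)
    (hW : W = ⟨0, 0, 0, 0, 16 * (4 * (m : ℚ) ^ 3 - 27 * (n : ℚ) ^ 2)⟩)
    (hW' : W' = ⟨0, 0, 0, 0, -432 * (4 * (m : ℚ) ^ 3 - 27 * (n : ℚ) ^ 2)⟩) :
    (∀ P : W.Point, 3 • P = 0 → P = 0) ∧ (∀ P : W'.Point, 3 • P = 0 → P = 0) := by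
  have not_sq : ∀ q : ℚ, q ^ 2 ≠ 4 * (m : ℚ) ^ 3 - 27 * (n : ℚ) ^ 2 := fun q hq ↦
    disc_ne_one m n (eq_one_of_squarefree_of_sq h (q := q) (by push_cast; exact hq))
  have not_sq' : ∀ q : ℚ, q ^ 2 ≠ -3 * (4 * (m : ℚ) ^ 3 - 27 * (n : ℚ) ^ 2) := fun q hq ↦
    disc_ne_neg_three m n (eq_neg_three_of_squarefree_of_sq h (q := q) (by push_cast; exact hq))
  refine ⟨fun P hP ↦ (sq_eq_of_three_nsmul_eq_zero _ W hW P hP).resolve_right ?_,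
    fun P hP ↦ (sq_eq_of_three_nsmul_eq_zero _ W' hW' P hP).resolve_right ?_⟩
  · rintro ⟨y, hy | hy⟩
    · exact not_sq (y / 4) (by linear_combination hy / 16)
    · exact not_sq' (y / 4) (by linear_combination hy / 16)
  · rintro ⟨y, hy | hy⟩
    · exact not_sq' (y / 12) (by linear_combination hy / 144)
    · exact not_sq (y / 36) (by linear_combination hy / 1296)
end
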